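/- arXiv:2107.07799 — 8 statements merged into one kernel-verified Lean document; each statement's English description precedes it below -/
import Mathlib

section
/- Assume K ≥ 2, p ≥ 1, that each empirical covariance matrix S^(k) ∈ ℝ^{p×p} (k = 1,…,K) is symmetric positive semidefinite with strictly positive diagonal entries, that n_k > 0 for each k, and that λ₁ > 0 and λ₂ ≥ 0. Then the fused joint graphical lasso objective F attains its infimum over K-tuples of symmetric positive definite p×p matrices, and the minimizer is unique. -/
open Matrix Finset

/-- The fused joint graphical lasso objective on `K`-tuples of `p × p` matrices. -/
noncomputable def fusedJGL {p K : ℕ} (n : Fin K → ℝ) (S : Fin K → Matrix (Fin p) (Fin p) ℝ)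
    (l1 l2 : ℝ) (Θ : Fin K → Matrix (Fin p) (Fin p) ℝ) : ℝ :=
  (∑ k, n k * (-Real.log (Θ k).det + (S k * Θ k).trace))
    + l1 * ∑ k, ∑ i, ∑ j, (if i ≠ j then |Θ k i j| else 0)
    + l2 * ∑ k, ∑ l, (if k ≠ l then ∑ i, ∑ j, |Θ k i j - Θ l i j| else 0)

open scoped MatrixOrder in
lemma psd_factor {p : ℕ} {A : Matrix (Fin p) (Fin p) ℝ} (hA : A.PosSemidef) :
    ∃ C : Matrix (Fin p) (Fin p) ℝ, A = Cᴴ * C :=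
  CStarAlgebra.nonneg_iff_eq_star_mul_self.mp (nonneg_iff_posSemidef.mpr hA)

lemma psd_trace_mul {p : ℕ} {A B : Matrix (Fin p) (Fin p) ℝ} (hA : A.PosSemidef)
    (hB : B.PosSemidef) : 0 ≤ (A * B).trace := by
  obtain ⟨C, rfl⟩ := psd_factor hA
  have := (hB.mul_mul_conjTranspose_same C).trace_nonneg
  rwa [Matrix.mul_assoc, Matrix.trace_mul_comm, ]

lemma psd_entry {p : ℕ} {A : Matrix (Fin p) (Fin p) ℝ} (hA : A.PosSemidef) (i j : Fin p) :
    |A i j| ≤ A.trace := by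
  have hd : ∀ i, A i i ≤ A.trace := fun i =>
    Finset.single_le_sum (f := fun i => A i i) (fun i _ => hA.diag_nonneg) (Finset.mem_univ i)
  have h2 : |A i j| ≤ (A i i + A j j) / 2 := by
    obtain ⟨C, rfl⟩ := psd_factor hA
    simp only [Matrix.mul_apply, Matrix.conjTranspose_apply, star_trivial]
    rw [← Finset.sum_add_distrib, Finset.sum_div]
    refine (Finset.abs_sum_le_sum_abs _ _).trans (Finset.sum_le_sum fun k _ => ?_)
    rw [abs_le]
    constructor <;> nlinarith [sq_nonneg (C k i - C k j), sq_nonneg (C k i + C k j)]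
  linarith [hd i, hd j]

lemma scalar_log {d : ℝ} (hd : 0 < d) : Real.log d / 2 ≤ Real.log ((1 + d) / 2) := by
  have : Real.log d ≤ Real.log (((1 + d) / 2) ^ 2) :=
    Real.log_le_log hd (by nlinarith [sq_nonneg (d - 1)])
  rw [Real.log_pow] at this
  push_cast at this
  linarith

lemma scalar_log_lt {d : ℝ} (hd : 0 < d) (h1 : d ≠ 1) :
    Real.log d / 2 < Real.log ((1 + d) / 2) := by
  have h2 : 0 < (d - 1) ^ 2 := by
    have := sub_ne_zero.mpr h1
    positivity
  have : Real.log d < Real.log (((1 + d) / 2) ^ 2) :=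
    Real.log_lt_log hd (by nlinarith)
  rw [Real.log_pow] at this
  push_cast at this
  linarith

lemma det_one_add_eig {p : ℕ} {D : Matrix (Fin p) (Fin p) ℝ} (hD : D.IsHermitian) :
    ((1 / 2 : ℝ) • (1 + D)).det = ∏ i, ((1 + hD.eigenvalues i) / 2) := by
  have h := congrArg (Polynomial.eval (-1 : ℝ)) hD.charpoly_eq
  rw [Matrix.eval_charpoly, Polynomial.eval_prod] at h
  have e : (1 / 2 : ℝ) • (1 + D) = (-1 / 2 : ℝ) • (scalar (Fin p) (-1 : ℝ) - D) := by
    ext i j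
    by_cases hij : i = j <;> simp [hij, Matrix.one_apply] <;> ring
  rw [e, Matrix.det_smul, h, ← Finset.card_univ, ← Finset.prod_const, ← Finset.prod_mul_distrib]
  refine Finset.prod_congr rfl fun i _ => ?_
  simp
  ring

lemma log_det_one_add {p : ℕ} {D : Matrix (Fin p) (Fin p) ℝ} (hD : D.PosDef) (h1 : D ≠ 1) :
    Real.log D.det / 2 < Real.log ((1 / 2 : ℝ) • (1 + D)).det := by
  have hpos := hD.eigenvalues_pos
  rw [det_one_add_eig hD.1, hD.1.det_eq_prod_eigenvalues,
    Real.log_prod (fun i _ => by simpa using (hpos i).ne'),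
    Real.log_prod (fun i _ => by have := hpos i; positivity), Finset.sum_div]
  refine Finset.sum_lt_sum (fun i _ => scalar_log (hpos i)) ?_
  by_contra! hcon
  apply h1
  have hall : hD.1.eigenvalues = fun _ => 1 := by
    funext i
    by_contra hne
    exact absurd (scalar_log_lt (hpos i) hne) (not_lt.mpr (hcon i (Finset.mem_univ i)))
  have := hD.1.spectral_theorem
  rw [hall] at this
  rw [this]
  have e : (diagonal (RCLike.ofReal ∘ fun _ : Fin p => (1 : ℝ)) : Matrix (Fin p) (Fin p) ℝ) = 1 := by
    ext i j
    simp [diagonal_apply, Matrix.one_apply]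
  rw [e, map_one]

lemma log_det_strict {p : ℕ} {A B : Matrix (Fin p) (Fin p) ℝ} (hA : A.PosDef) (hB : B.PosDef)
    (hne : A ≠ B) :
    (Real.log A.det + Real.log B.det) / 2 < Real.log ((1 / 2 : ℝ) • (A + B)).det := by
  obtain ⟨C, hC⟩ := psd_factor hA.posSemidef
  have hdA : A.det = C.det * C.det := by rw [hC]; simp
  have hC0 : C.det ≠ 0 := by
    intro h
    have := hA.det_pos
    rw [hdA, h] at this
    simp at this
  have hCu : IsUnit C.det := isUnit_iff_ne_zero.mpr hC0
  have i1 : C * C⁻¹ = 1 := Matrix.mul_nonsing_inv C hCu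
  have i2 : C⁻¹ * C = 1 := Matrix.nonsing_inv_mul C hCu
  have i3 : Cᴴ * (C⁻¹)ᴴ = 1 := by rw [← Matrix.conjTranspose_mul, i2]; simp
  obtain ⟨D, hDdef⟩ : ∃ D, D = (C⁻¹)ᴴ * B * C⁻¹ := ⟨_, rfl⟩
  have hBD : B = Cᴴ * D * C := by
    calc B = (Cᴴ * (C⁻¹)ᴴ) * B * (C⁻¹ * C) := by rw [i3, i2]; simp
      _ = _ := by rw [hDdef]; simp only [Matrix.mul_assoc]
  have hdB : B.det = A.det * D.det := by
    rw [hdA, hBD]; simp; ring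
  have hDpos : D.PosDef := by
    have hs : D.PosSemidef := by
      rw [hDdef]; exact hB.posSemidef.conjTranspose_mul_mul_same _
    refine hs.posDef_iff_det_ne_zero.mpr ?_
    intro h
    have := hB.det_pos
    rw [hdB, h] at this
    simp at this
  have hD1 : D ≠ 1 := by
    rintro rfl
    apply hne
    rw [hC, hBD]; simp
  have hmid : (1 / 2 : ℝ) • (A + B) = Cᴴ * ((1 / 2 : ℝ) • (1 + D)) * C := by
    rw [hC, hBD]
    simp [Matrix.mul_add, Matrix.add_mul]
  have hdm : ((1 / 2 : ℝ) • (A + B)).det = A.det * ((1 / 2 : ℝ) • (1 + D)).det := by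
    rw [hmid, hdA, Matrix.det_mul, Matrix.det_mul]; simp only [Matrix.det_conjTranspose, star_trivial]; ring
  have hmpos : 0 < ((1 / 2 : ℝ) • (1 + D)).det := by
    rw [det_one_add_eig hDpos.1]
    exact Finset.prod_pos fun i _ => by have := hDpos.eigenvalues_pos i; positivity
  rw [hdm, hdB, Real.log_mul hA.det_pos.ne' hmpos.ne', Real.log_mul hA.det_pos.ne' hDpos.det_pos.ne']
  linarith [log_det_one_add hDpos hD1]

lemma log_det_le {p : ℕ} {A : Matrix (Fin p) (Fin p) ℝ} (hA : A.PosDef) {ε : ℝ} (hε : 0 < ε) :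
    Real.log A.det ≤ ε * A.trace + p * (-Real.log ε - 1) := by
  have hpos := hA.eigenvalues_pos
  rw [hA.1.trace_eq_sum_eigenvalues, hA.1.det_eq_prod_eigenvalues,
    Real.log_prod (fun i _ => by simpa using (hpos i).ne'), Finset.mul_sum]
  have : (p : ℝ) * (-Real.log ε - 1) = ∑ _i : Fin p, (-Real.log ε - 1) := by
    simp
    ring
  rw [this, ← Finset.sum_add_distrib]
  refine Finset.sum_le_sum fun i _ => ?_
  have h := Real.log_le_sub_one_of_pos (mul_pos hε (hpos i))
  rw [Real.log_mul hε.ne' (hpos i).ne'] at h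
  simp
  linarith

lemma coercive {p : ℕ} (hp : 1 ≤ p) {S : Matrix (Fin p) (Fin p) ℝ} (hS : S.PosSemidef)
    (hSd : ∀ i, 0 < S i i) {n l1 : ℝ} (hn : 0 < n) (hl1 : 0 < l1) :
    ∃ c > 0, ∃ C : ℝ, ∀ T : Matrix (Fin p) (Fin p) ℝ, T.PosDef →
      c * T.trace - C ≤ n * (-Real.log T.det + (S * T).trace)
        + l1 * ∑ i, ∑ j, (if i ≠ j then |T i j| else 0) := by
  obtain ⟨i0, -, hi0⟩ := Finset.exists_min_image (Finset.univ : Finset (Fin p)) (fun i => S i i)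
    ⟨⟨0, hp⟩, Finset.mem_univ _⟩
  obtain ⟨s, hs⟩ : ∃ s, s = S i0 i0 := ⟨_, rfl⟩
  have hs0 : 0 < s := hs ▸ hSd i0
  obtain ⟨M, hM⟩ : ∃ M, M = S.trace := ⟨_, rfl⟩
  have hM0 : 0 ≤ M := hM ▸ hS.trace_nonneg
  obtain ⟨t, ht⟩ : ∃ t, t = l1 / (n * M + l1) := ⟨_, rfl⟩
  have hden : 0 < n * M + l1 := by positivity
  have ht0 : 0 < t := by rw [ht]; positivity
  have ht1 : t ≤ 1 := by
    rw [ht, div_le_one hden]; nlinarith [mul_nonneg hn.le hM0]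
  have htM : t * n * M ≤ l1 := by
    have : t * (n * M + l1) = l1 := by rw [ht]; field_simp
    nlinarith
  obtain ⟨c0, hc0⟩ : ∃ c0, c0 = t * n * s := ⟨_, rfl⟩
  have hc0p : 0 < c0 := by rw [hc0]; positivity
  refine ⟨c0 / 2, by positivity, n * (p * (-Real.log (c0 / (2 * n)) - 1)), fun T hT => ?_⟩
  have h1 := log_det_le hT (ε := c0 / (2 * n)) (by positivity)
  have h2 := mul_le_mul_of_nonneg_left h1 hn.le
  have e2 : n * (c0 / (2 * n) * T.trace) = c0 / 2 * T.trace := by field_simp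
  have h3 : 0 ≤ (S * T).trace := psd_trace_mul hS hT.posSemidef
  obtain ⟨P, hP⟩ : ∃ P, P = ∑ i, ∑ j, (if i ≠ j then |T i j| else 0) := ⟨_, rfl⟩
  have hP0 : 0 ≤ P := by
    rw [hP]
    exact Finset.sum_nonneg fun i _ => Finset.sum_nonneg fun j _ => by split_ifs <;> positivity
  have h4 : s * T.trace - M * P ≤ (S * T).trace := by
    rw [hP]
    simp only [Matrix.trace, Matrix.diag_apply, Matrix.mul_apply, Finset.mul_sum]
    rw [← Finset.sum_sub_distrib]
    refine Finset.sum_le_sum fun i _ => ?_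
    have e : s * T i i = ∑ j, (if i = j then s * T i i else 0) := by simp
    rw [e, ← Finset.sum_sub_distrib]
    refine Finset.sum_le_sum fun j _ => ?_
    by_cases hij : i = j
    · subst hij
      simp
      exact mul_le_mul_of_nonneg_right (hs ▸ hi0 i (Finset.mem_univ i)) hT.posSemidef.diag_nonneg
    · simp only [hij, if_false, ne_eq, not_false_eq_true, if_true]
      have hsym : T j i = T i j := by simpa using (hT.1.apply i j)
      rw [hsym]
      have a1 := neg_abs_le (S i j * T i j)
      rw [abs_mul] at a1
      have a2 := mul_le_mul_of_nonneg_right (psd_entry hS i j) (abs_nonneg (T i j))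
      rw [← hM] at a2
      linarith
  rw [← hP]
  have h5 : t * n * (s * T.trace - M * P) ≤ t * n * (S * T).trace :=
    mul_le_mul_of_nonneg_left h4 (by positivity)
  have h6 : t * (n * (S * T).trace) ≤ 1 * (n * (S * T).trace) :=
    mul_le_mul_of_nonneg_right ht1 (by positivity)
  have h7 : t * n * M * P ≤ l1 * P := mul_le_mul_of_nonneg_right htM hP0
  have e3 : t * n * (s * T.trace - M * P) = c0 * T.trace - t * n * M * P := by rw [hc0]; ring
  nlinarith

lemma fused_strict {p K : ℕ} (S : Fin K → Matrix (Fin p) (Fin p) ℝ)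
    (n : Fin K → ℝ) (hn : ∀ k, 0 < n k) (l1 l2 : ℝ) (hl1 : 0 < l1) (hl2 : 0 ≤ l2)
    (A B : Fin K → Matrix (Fin p) (Fin p) ℝ) (hA : ∀ k, (A k).PosDef) (hB : ∀ k, (B k).PosDef)
    (hne : A ≠ B) :
    fusedJGL n S l1 l2 (fun k => (1 / 2 : ℝ) • (A k + B k)) <
      (fusedJGL n S l1 l2 A + fusedJGL n S l1 l2 B) / 2 := by
  have habs : ∀ x y : ℝ, |1 / 2 * (x + y)| ≤ (|x| + |y|) / 2 := fun x y => by
    rw [abs_mul, abs_of_pos (by norm_num : (0 : ℝ) < 1 / 2)]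
    linarith [abs_add_le x y]
  have t1 : ∑ k, n k * (-Real.log ((1 / 2 : ℝ) • (A k + B k)).det
        + (S k * ((1 / 2 : ℝ) • (A k + B k))).trace) <
      ((∑ k, n k * (-Real.log (A k).det + (S k * A k).trace)) +
       (∑ k, n k * (-Real.log (B k).det + (S k * B k).trace))) / 2 := by
    have key : ∀ k, n k * (-Real.log ((1 / 2 : ℝ) • (A k + B k)).det
        + (S k * ((1 / 2 : ℝ) • (A k + B k))).trace) =
        (n k * (-Real.log (A k).det + (S k * A k).trace) +
        n k * (-Real.log (B k).det + (S k * B k).trace)) / 2 -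
        n k * (Real.log ((1 / 2 : ℝ) • (A k + B k)).det -
          (Real.log (A k).det + Real.log (B k).det) / 2) := fun k => by
      rw [Matrix.mul_smul, Matrix.trace_smul, Matrix.mul_add, Matrix.trace_add, smul_eq_mul]
      ring
    rw [← Finset.sum_add_distrib, Finset.sum_div]
    obtain ⟨k0, hk0⟩ := Function.ne_iff.mp hne
    refine Finset.sum_lt_sum (fun k _ => ?_) ⟨k0, Finset.mem_univ _, ?_⟩
    · rw [key k]
      by_cases h : A k = B k
      · have e : (1 / 2 : ℝ) • (A k + B k) = A k := by
          rw [← h, ← two_smul ℝ (A k), smul_smul]; norm_num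
        rw [e, ← h]
        apply le_of_eq
        ring
      · have := mul_pos (hn k) (sub_pos.mpr (log_det_strict (hA k) (hB k) h))
        linarith
    · rw [key k0]
      have := mul_pos (hn k0) (sub_pos.mpr (log_det_strict (hA k0) (hB k0) hk0))
      linarith
  have t2 : (∑ k, ∑ i, ∑ j, (if i ≠ j then |((1 / 2 : ℝ) • (A k + B k)) i j| else 0)) ≤
      ((∑ k, ∑ i, ∑ j, (if i ≠ j then |A k i j| else 0)) +
      (∑ k, ∑ i, ∑ j, (if i ≠ j then |B k i j| else 0))) / 2 := by
    simp only [← Finset.sum_add_distrib, Finset.sum_div]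
    refine Finset.sum_le_sum fun k _ => Finset.sum_le_sum fun i _ => Finset.sum_le_sum fun j _ => ?_
    split_ifs
    · exact habs _ _
    · simp
  have t3 : (∑ k, ∑ l, (if k ≠ l then ∑ i, ∑ j, |((1 / 2 : ℝ) • (A k + B k)) i j
        - ((1 / 2 : ℝ) • (A l + B l)) i j| else 0)) ≤
      ((∑ k, ∑ l, (if k ≠ l then ∑ i, ∑ j, |A k i j - A l i j| else 0)) +
      (∑ k, ∑ l, (if k ≠ l then ∑ i, ∑ j, |B k i j - B l i j| else 0))) / 2 := by
    simp only [← Finset.sum_add_distrib, Finset.sum_div]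
    refine Finset.sum_le_sum fun k _ => Finset.sum_le_sum fun l _ => ?_
    split_ifs
    · simp only [← Finset.sum_add_distrib, Finset.sum_div]
      refine Finset.sum_le_sum fun i _ => Finset.sum_le_sum fun j _ => ?_
      refine le_trans (le_of_eq ?_) (habs _ _)
      congr 1
      simp only [Matrix.smul_apply, Matrix.add_apply, smul_eq_mul]
      ring
    · simp
  have t2' := mul_le_mul_of_nonneg_left t2 hl1.le
  have t3' := mul_le_mul_of_nonneg_left t3 hl2
  unfold fusedJGL
  linarith

lemma psd_closed {p : ℕ} : IsClosed {A : Matrix (Fin p) (Fin p) ℝ | A.PosSemidef} := by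
  simp only [posSemidef_iff_dotProduct_mulVec, Set.ofPred_and, Set.ofPred_forall, IsHermitian]
  refine IsClosed.inter (isClosed_eq (by fun_prop) (by fun_prop)) (isClosed_iInter fun x => ?_)
  exact isClosed_le (by fun_prop) (by fun_prop)

lemma compact_aux {p K : ℕ} (R δ : Fin K → ℝ) :
    IsCompact {T : Fin K → Matrix (Fin p) (Fin p) ℝ |
      ∀ k, (T k).PosSemidef ∧ (T k).trace ≤ R k ∧ δ k ≤ (T k).det} := by
  have hc : IsCompact (Set.pi Set.univ fun k : Fin K => (Set.pi Set.univ fun _ : Fin p =>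
      Set.pi Set.univ fun _ : Fin p => Set.Icc (-R k) (R k) : Set (Matrix (Fin p) (Fin p) ℝ))) :=
    isCompact_univ_pi fun k => isCompact_univ_pi fun _ => isCompact_univ_pi fun _ => isCompact_Icc
  refine hc.of_isClosed_subset ?_ ?_
  · simp only [Set.ofPred_forall, Set.ofPred_and]
    refine isClosed_iInter fun k => ?_
    have h0 : Continuous fun T : Fin K → Matrix (Fin p) (Fin p) ℝ => T k := continuous_apply k
    have h1 : IsClosed {T : Fin K → Matrix (Fin p) (Fin p) ℝ | (T k).PosSemidef} :=
      IsClosed.preimage h0 psd_closed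
    refine h1.inter
      ((isClosed_le ?_ continuous_const).inter (isClosed_le continuous_const ?_))
    · exact (continuous_apply k).matrix_trace
    · exact (continuous_apply k).matrix_det
  · intro T hT k _ i _ j _
    have := psd_entry (hT k).1 i j
    exact abs_le.mp (this.trans (hT k).2.1)

lemma fused_cont {p K : ℕ} (S : Fin K → Matrix (Fin p) (Fin p) ℝ)
    (n : Fin K → ℝ) (l1 l2 : ℝ) (s : Set (Fin K → Matrix (Fin p) (Fin p) ℝ))
    (hs : ∀ T ∈ s, ∀ k, (T k).det ≠ 0) : ContinuousOn (fusedJGL n S l1 l2) s := by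
  unfold fusedJGL
  have e : ∀ k i j, Continuous fun T : Fin K → Matrix (Fin p) (Fin p) ℝ => T k i j :=
    fun k i j => (continuous_apply k).matrix_elem i j
  refine ContinuousOn.add (ContinuousOn.add ?_ ?_) ?_
  · refine continuousOn_finsetSum _ fun k _ => continuousOn_const.mul (ContinuousOn.add ?_ ?_)
    · exact (ContinuousOn.log ((continuous_apply k).matrix_det).continuousOn
        fun T hT => hs T hT k).neg
    · exact ((continuous_const.matrix_mul (continuous_apply k)).matrix_trace).continuousOn
  · refine Continuous.continuousOn (continuous_const.mul ?_)
    refine continuous_finsetSum _ fun k _ => continuous_finsetSum _ fun i _ =>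
      continuous_finsetSum _ fun j _ => ?_
    split_ifs
    · exact (e k i j).abs
    · exact continuous_const
  · refine Continuous.continuousOn (continuous_const.mul ?_)
    refine continuous_finsetSum _ fun k _ => continuous_finsetSum _ fun l _ => ?_
    split_ifs
    · exact continuous_finsetSum _ fun i _ =>
        continuous_finsetSum _ fun j _ => ((e k i j).sub (e l i j)).abs
    · exact continuous_const

/-- The fused joint graphical lasso objective attains its infimum over `K`-tuples of
symmetric positive definite matrices, and the minimizer is unique. -/
theorem stmt0 {p K : ℕ} (hK : 2 ≤ K) (hp : 1 ≤ p)
    (S : Fin K → Matrix (Fin p) (Fin p) ℝ) (hS : ∀ k, (S k).PosSemidef)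
    (hSd : ∀ k i, 0 < S k i i)
    (n : Fin K → ℝ) (hn : ∀ k, 0 < n k)
    (l1 l2 : ℝ) (hl1 : 0 < l1) (hl2 : 0 ≤ l2) :
    ∃! Θ : Fin K → Matrix (Fin p) (Fin p) ℝ,
      (∀ k, (Θ k).PosDef) ∧
        ∀ Θ' : Fin K → Matrix (Fin p) (Fin p) ℝ, (∀ k, (Θ' k).PosDef) →
          fusedJGL n S l1 l2 Θ ≤ fusedJGL n S l1 l2 Θ' := by
  have hex : ∃ T : Fin K → Matrix (Fin p) (Fin p) ℝ, (∀ k, (T k).PosDef) ∧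
        ∀ Θ' : Fin K → Matrix (Fin p) (Fin p) ℝ, (∀ k, (Θ' k).PosDef) →
          fusedJGL n S l1 l2 T ≤ fusedJGL n S l1 l2 Θ' := by
    choose c hc C hC using fun k => coercive hp (hS k) (hSd k) (hn k) hl1
    obtain ⟨F0, hF0⟩ : ∃ F0, F0 = fusedJGL n S l1 l2 (fun _ => 1) := ⟨_, rfl⟩
    obtain ⟨Q, hQ⟩ : ∃ Q, Q = F0 + ∑ k, |C k| := ⟨_, rfl⟩
    have hsub : ∀ T : Fin K → Matrix (Fin p) (Fin p) ℝ, (∀ k, (T k).PosDef) →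
        fusedJGL n S l1 l2 T ≤ F0 → ∀ k, (T k).PosSemidef ∧
          (T k).trace ≤ (Q + |C k|) / c k ∧ Real.exp (-(Q / n k)) ≤ (T k).det := by
      intro T hT hTF k
      obtain ⟨h, hh⟩ : ∃ h : Fin K → ℝ, ∀ k, h k =
        n k * (-Real.log (T k).det + (S k * T k).trace)
        + l1 * ∑ i, ∑ j, (if i ≠ j then |T k i j| else 0) := ⟨_, fun _ => rfl⟩
      have hlow : ∀ k, c k * (T k).trace - C k ≤ h k := fun k => by
        rw [hh]; exact hC k (T k) (hT k)
      have hlow2 : ∀ k, -|C k| ≤ h k := fun k => by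
        have := mul_nonneg (hc k).le (hT k).posSemidef.trace_nonneg
        linarith [hlow k, le_abs_self (C k)]
      have hsum : ∑ k, h k ≤ F0 := by
        refine le_trans ?_ hTF
        unfold fusedJGL
        simp only [hh]
        rw [Finset.sum_add_distrib, ← Finset.mul_sum]
        have : 0 ≤ l2 * ∑ k, ∑ l, (if k ≠ l then ∑ i, ∑ j, |T k i j - T l i j| else 0) := by
          refine mul_nonneg hl2 (Finset.sum_nonneg fun k _ => Finset.sum_nonneg fun l _ => ?_)
          split_ifs
          · exact Finset.sum_nonneg fun i _ => Finset.sum_nonneg fun j _ => abs_nonneg _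
          · exact le_rfl
        linarith
      have hk : h k ≤ Q := by
        have h1 : h k + |C k| ≤ ∑ k, (h k + |C k|) :=
          Finset.single_le_sum (f := fun k => h k + |C k|)
            (fun i _ => by linarith [hlow2 i]) (Finset.mem_univ k)
        rw [Finset.sum_add_distrib] at h1
        linarith [abs_nonneg (C k)]
      refine ⟨(hT k).posSemidef, ?_, ?_⟩
      · rw [le_div_iff₀ (hc k)]
        linarith [hlow k, le_abs_self (C k)]
      · rw [← Real.le_log_iff_exp_le (hT k).det_pos, neg_le, le_div_iff₀ (hn k)]
        have h3 := mul_nonneg (hn k).le (psd_trace_mul (hS k) (hT k).posSemidef)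
        have h4 : 0 ≤ l1 * ∑ i, ∑ j, (if i ≠ j then |T k i j| else 0) :=
          mul_nonneg hl1.le (Finset.sum_nonneg fun i _ => Finset.sum_nonneg fun j _ => by
            split_ifs <;> positivity)
        have := hh k
        rw [mul_add] at this
        linarith
    have hone : ∀ k : Fin K, ((fun _ => 1 : Fin K → Matrix (Fin p) (Fin p) ℝ) k).PosDef :=
      fun _ => PosDef.one
    have hcomp := compact_aux (p := p) (fun k => (Q + |C k|) / c k)
      (fun k => Real.exp (-(Q / n k)))
    have hmem1 := hsub _ hone hF0.ge
    obtain ⟨T, hT, hmin⟩ := hcomp.exists_isMinOn ⟨_, hmem1⟩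
      (fused_cont S n l1 l2 _ fun T hT k => ((Real.exp_pos _).trans_le (hT k).2.2).ne')
    refine ⟨T, fun k => (hT k).1.posDef_iff_det_ne_zero.mpr
      ((Real.exp_pos _).trans_le (hT k).2.2).ne', fun T' hT' => ?_⟩
    by_cases hle : fusedJGL n S l1 l2 T' ≤ F0
    · exact hmin (hsub T' hT' hle)
    · have h1 : fusedJGL n S l1 l2 T ≤ F0 := hF0 ▸ hmin hmem1
      linarith
  obtain ⟨T, hT, hmin⟩ := hex
  refine ⟨T, ⟨hT, hmin⟩, ?_⟩
  rintro T' ⟨hT', hmin'⟩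
  by_contra hne
  have h1 := fused_strict S n hn l1 l2 hl1 hl2 T' T hT' hT hne
  have hmid : ∀ k, ((fun k => (1 / 2 : ℝ) • (T' k + T k)) k).PosDef := fun k =>
    ((hT' k).add (hT k)).smul (by norm_num)
  have h2 := hmin _ hmid
  have h3 := hmin' _ hmid
  linarith
end

section
/- Assume K ≥ 2, p ≥ 1, that each empirical covariance matrix S^(k) ∈ ℝ^{p×p} (k = 1,…,K) is symmetric positive semidefinite with strictly positive diagonal entries, that n_k > 0 for each k, and that λ₁ > 0 and λ₂ ≥ 0. Then the group joint graphical lasso objective F attains its infimum over K-tuples of symmetric positive definite p×p matrices, and the minimizer is unique. -/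
open Matrix Finset

/-- The group joint graphical lasso objective on `K`-tuples of `p × p` matrices. -/
noncomputable def groupJGL {p K : ℕ} (n : Fin K → ℝ) (S : Fin K → Matrix (Fin p) (Fin p) ℝ)
    (l1 l2 : ℝ) (Θ : Fin K → Matrix (Fin p) (Fin p) ℝ) : ℝ :=
  (∑ k, n k * (-Real.log (Θ k).det + (S k * Θ k).trace))
    + l1 * ∑ k, ∑ i, ∑ j, (if i ≠ j then |Θ k i j| else 0)
    + l2 * ∑ i, ∑ j, (if i ≠ j then Real.sqrt (∑ k, (Θ k i j) ^ 2) else 0)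


open scoped MatrixOrder in
lemma jgl_trace_mul_nonneg {p : ℕ} {S T : Matrix (Fin p) (Fin p) ℝ} (hS : S.PosSemidef)
    (hT : T.PosSemidef) : 0 ≤ (S * T).trace := by
  obtain ⟨B, rfl⟩ := CStarAlgebra.nonneg_iff_eq_star_mul_self.mp hS.nonneg
  have h := (hT.mul_mul_conjTranspose_same B).trace_nonneg
  rw [Matrix.trace_mul_comm, ← mul_assoc] at h
  exact h

lemma jgl_logdet_le {p : ℕ} {X : Matrix (Fin p) (Fin p) ℝ} (hX : X.PosDef) :
    Real.log X.det ≤ X.trace - p := by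
  rw [hX.1.det_eq_prod_eigenvalues, hX.1.trace_eq_sum_eigenvalues]
  simp only [RCLike.ofReal_real_eq_id, id]
  rw [Real.log_prod (fun i _ => (hX.eigenvalues_pos i).ne')]
  have : ∑ i, Real.log (hX.1.eigenvalues i) ≤ ∑ i, (hX.1.eigenvalues i - 1) :=
    Finset.sum_le_sum fun i _ => Real.log_le_sub_one_of_pos (hX.eigenvalues_pos i)
  simpa using this

lemma jgl_logdet_lt {p : ℕ} {X : Matrix (Fin p) (Fin p) ℝ} (hX : X.PosDef) (h1 : X ≠ 1) :
    Real.log X.det < X.trace - p := by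
  rw [hX.1.det_eq_prod_eigenvalues, hX.1.trace_eq_sum_eigenvalues]
  simp only [RCLike.ofReal_real_eq_id, id]
  rw [Real.log_prod (fun i _ => (hX.eigenvalues_pos i).ne')]
  have hex : ∃ i, hX.1.eigenvalues i ≠ 1 := by
    by_contra! hc
    apply h1
    rw [hX.1.spectral_theorem]
    have : (RCLike.ofReal ∘ hX.1.eigenvalues : Fin p → ℝ) = fun _ => 1 := by
      ext i; simp [hc i]
    rw [this, Matrix.diagonal_one, map_one]
  obtain ⟨i, hi⟩ := hex
  have : ∑ i, Real.log (hX.1.eigenvalues i) < ∑ i, (hX.1.eigenvalues i - 1) :=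
    Finset.sum_lt_sum (fun i _ => Real.log_le_sub_one_of_pos (hX.eigenvalues_pos i))
      ⟨i, Finset.mem_univ _, Real.log_lt_sub_one_of_pos (hX.eigenvalues_pos i) hi⟩
  simpa using this

open scoped MatrixOrder in
lemma jgl_exists_X {p : ℕ} {A M : Matrix (Fin p) (Fin p) ℝ} (hA : A.PosDef) (hM : M.PosDef) :
    ∃ X : Matrix (Fin p) (Fin p) ℝ, X.PosDef ∧ Real.log X.det = Real.log A.det - Real.log M.det ∧
      X.trace = (M⁻¹ * A).trace ∧ (X = 1 → A = M) := by
  have hMi := hM.inv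
  obtain ⟨B, hB⟩ := CStarAlgebra.nonneg_iff_eq_star_mul_self.mp hMi.posSemidef.nonneg
  rw [star_eq_conjTranspose] at hB
  have hd : M⁻¹.det = B.det * B.det := by
    rw [hB, det_mul, det_conjTranspose]; simp
  have hMM : M⁻¹ * M = 1 := Matrix.nonsing_inv_mul _ (hM.det_pos.ne'.isUnit)
  have hX : (B * A * Bᴴ).det = A.det * M⁻¹.det := by
    rw [hd, det_mul, det_mul, det_conjTranspose]; simp; ring
  refine ⟨B * A * Bᴴ, ?_, ?_, ?_, ?_⟩
  · rw [(hA.posSemidef.mul_mul_conjTranspose_same B).posDef_iff_det_ne_zero, hX]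
    exact (mul_pos hA.det_pos hMi.det_pos).ne'
  · rw [hX, Real.log_mul hA.det_pos.ne' hMi.det_pos.ne', det_nonsing_inv,
      Ring.inverse_eq_inv', Real.log_inv]; ring
  · rw [hB, Matrix.trace_mul_comm, ← mul_assoc]
  · intro h
    rw [mul_assoc, mul_eq_one_comm, mul_assoc, ← hB] at h
    calc A = A * (M⁻¹ * M) := by rw [hMM, mul_one]
      _ = M := by rw [← mul_assoc, h, one_mul]

lemma jgl_mid_posDef {p : ℕ} {A B : Matrix (Fin p) (Fin p) ℝ} (hA : A.PosDef) (hB : B.PosDef) :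
    ((1 / 2 : ℝ) • (A + B)).PosDef := (hA.add hB).smul (by norm_num)

lemma jgl_mid_trace {p : ℕ} {A B M : Matrix (Fin p) (Fin p) ℝ} (hM : M.PosDef)
    (h : (1 / 2 : ℝ) • (A + B) = M) : (M⁻¹ * A).trace + (M⁻¹ * B).trace = 2 * p := by
  have hMM : M⁻¹ * M = 1 := Matrix.nonsing_inv_mul _ (hM.det_pos.ne'.isUnit)
  have h2 : A + B = (2 : ℝ) • M := by rw [← h, smul_smul]; norm_num
  rw [← trace_add, ← mul_add, h2, mul_smul_comm, hMM]
  simp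

lemma jgl_mid_le {p : ℕ} {A B : Matrix (Fin p) (Fin p) ℝ} (hA : A.PosDef) (hB : B.PosDef) :
    Real.log A.det + Real.log B.det ≤ 2 * Real.log ((1 / 2 : ℝ) • (A + B)).det := by
  have hM := jgl_mid_posDef hA hB
  have ht := jgl_mid_trace hM rfl
  obtain ⟨X, hX, hX1, hX2, -⟩ := jgl_exists_X hA hM
  obtain ⟨Y, hY, hY1, hY2, -⟩ := jgl_exists_X hB hM
  have := jgl_logdet_le hX
  have := jgl_logdet_le hY
  linarith

lemma jgl_mid_lt {p : ℕ} {A B : Matrix (Fin p) (Fin p) ℝ} (hA : A.PosDef) (hB : B.PosDef)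
    (hne : A ≠ B) :
    Real.log A.det + Real.log B.det < 2 * Real.log ((1 / 2 : ℝ) • (A + B)).det := by
  have hM := jgl_mid_posDef hA hB
  have ht := jgl_mid_trace hM rfl
  obtain ⟨X, hX, hX1, hX2, hX3⟩ := jgl_exists_X hA hM
  obtain ⟨Y, hY, hY1, hY2, -⟩ := jgl_exists_X hB hM
  have hX' : X ≠ 1 := by
    intro h
    apply hne
    have h3 := hX3 h
    have h4 : (2 : ℝ) • A = A + B := by
      conv_lhs => rw [h3]
      rw [smul_smul]; norm_num
    rw [two_smul] at h4
    exact add_left_cancel h4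
  have := jgl_logdet_lt hX hX'
  have := jgl_logdet_le hY
  linarith

lemma jgl_sqrt_mid {K : ℕ} (a b : Fin K → ℝ) :
    2 * Real.sqrt (∑ k, ((1 / 2 : ℝ) * (a k + b k)) ^ 2)
      ≤ Real.sqrt (∑ k, a k ^ 2) + Real.sqrt (∑ k, b k ^ 2) := by
  have h := norm_add_le (WithLp.toLp 2 a : EuclideanSpace ℝ (Fin K)) (WithLp.toLp 2 b)
  simp only [EuclideanSpace.norm_eq, PiLp.add_apply, Real.norm_eq_abs, sq_abs] at h
  refine le_trans (le_of_eq ?_) h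
  have : ∑ k, ((1 / 2 : ℝ) * (a k + b k)) ^ 2 = (1 / 2) ^ 2 * ∑ k, (a k + b k) ^ 2 := by
    rw [Finset.mul_sum]; exact Finset.sum_congr rfl fun k _ => by ring
  rw [this, Real.sqrt_mul (by positivity), Real.sqrt_sq (by norm_num)]
  ring

lemma jgl_mid_obj {p K : ℕ} (S : Fin K → Matrix (Fin p) (Fin p) ℝ)
    (n : Fin K → ℝ) (hn : ∀ k, 0 < n k)
    (l1 l2 : ℝ) (hl1 : 0 < l1) (hl2 : 0 ≤ l2) (A B : Fin K → Matrix (Fin p) (Fin p) ℝ)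
    (hA : ∀ k, (A k).PosDef) (hB : ∀ k, (B k).PosDef) (hne : A ≠ B) :
    2 * groupJGL n S l1 l2 (fun k => (1 / 2 : ℝ) • (A k + B k))
      < groupJGL n S l1 l2 A + groupJGL n S l1 l2 B := by
  obtain ⟨k0, hk0⟩ := Function.ne_iff.mp hne
  unfold groupJGL
  have tr : ∀ k, (S k * ((1 / 2 : ℝ) • (A k + B k))).trace
      = 1 / 2 * ((S k * A k).trace + (S k * B k).trace) := by
    intro k; rw [mul_smul_comm, trace_smul, mul_add, trace_add, smul_eq_mul]
  have e1 : 2 * ∑ k, n k * (-Real.log ((1 / 2 : ℝ) • (A k + B k)).det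
        + (S k * ((1 / 2 : ℝ) • (A k + B k))).trace)
      < (∑ k, n k * (-Real.log (A k).det + (S k * A k).trace))
        + ∑ k, n k * (-Real.log (B k).det + (S k * B k).trace) := by
    rw [Finset.mul_sum, ← Finset.sum_add_distrib]
    refine Finset.sum_lt_sum (fun k _ => ?_) ⟨k0, Finset.mem_univ _, ?_⟩
    · rw [tr]; nlinarith [mul_le_mul_of_nonneg_left (jgl_mid_le (hA k) (hB k)) (hn k).le]
    · rw [tr]; nlinarith [mul_lt_mul_of_pos_left (jgl_mid_lt (hA k0) (hB k0) hk0) (hn k0)]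
  have e2 : 2 * ∑ k, ∑ i, ∑ j, (if i ≠ j then |((1 / 2 : ℝ) • (A k + B k)) i j| else 0)
      ≤ (∑ k, ∑ i, ∑ j, (if i ≠ j then |A k i j| else 0))
        + ∑ k, ∑ i, ∑ j, (if i ≠ j then |B k i j| else 0) := by
    simp only [Finset.mul_sum, ← Finset.sum_add_distrib]
    refine Finset.sum_le_sum fun k _ => Finset.sum_le_sum fun i _ => Finset.sum_le_sum fun j _ => ?_
    split_ifs
    · simp only [Matrix.smul_apply, Matrix.add_apply, smul_eq_mul, abs_mul]
      rw [abs_of_pos (by norm_num : (0 : ℝ) < 1 / 2)]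
      linarith [abs_add_le (A k i j) (B k i j)]
    · simp
  have e3 : 2 * ∑ i, ∑ j, (if i ≠ j then
        Real.sqrt (∑ k, (((1 / 2 : ℝ) • (A k + B k)) i j) ^ 2) else 0)
      ≤ (∑ i, ∑ j, (if i ≠ j then Real.sqrt (∑ k, (A k i j) ^ 2) else 0))
        + ∑ i, ∑ j, (if i ≠ j then Real.sqrt (∑ k, (B k i j) ^ 2) else 0) := by
    simp only [Finset.mul_sum, ← Finset.sum_add_distrib]
    refine Finset.sum_le_sum fun i _ => Finset.sum_le_sum fun j _ => ?_
    split_ifs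
    · exact jgl_sqrt_mid (fun k => A k i j) (fun k => B k i j)
    · simp
  have e2' := mul_le_mul_of_nonneg_left e2 hl1.le
  have e3' := mul_le_mul_of_nonneg_left e3 hl2
  linarith

/-- The contribution of one class to the objective, without the group penalty. -/
noncomputable def jglClass {p : ℕ} (n l1 : ℝ) (S T : Matrix (Fin p) (Fin p) ℝ) : ℝ :=
  n * (-Real.log T.det + (S * T).trace) + l1 * ∑ i, ∑ j, (if i ≠ j then |T i j| else 0)

lemma jgl_linear_bound {p : ℕ} (hp : 1 ≤ p) (S : Matrix (Fin p) (Fin p) ℝ) (hS : S.PosSemidef)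
    (hSd : ∀ i, 0 < S i i) (n l1 : ℝ) (hn : 0 < n) (hl1 : 0 < l1) :
    ∃ c : ℝ, 0 < c ∧ ∀ T : Matrix (Fin p) (Fin p) ℝ, T.PosSemidef →
      c * T.trace ≤ n * (S * T).trace + l1 * ∑ i, ∑ j, (if i ≠ j then |T i j| else 0) := by
  have : Nonempty (Fin p) := ⟨⟨0, hp⟩⟩
  obtain ⟨i0, hi0⟩ := Finite.exists_min (fun i => S i i)
  set m := ∑ i, ∑ j, |S i j| with hm
  have hm0 : 0 ≤ m := by positivity
  have hmS : ∀ i j, |S i j| ≤ m := fun i j =>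
    (Finset.single_le_sum (f := fun j => |S i j|) (fun _ _ => abs_nonneg _)
      (Finset.mem_univ j)).trans
      (Finset.single_le_sum (f := fun i => ∑ j, |S i j|)
        (fun _ _ => Finset.sum_nonneg fun _ _ => abs_nonneg _) (Finset.mem_univ i))
  have hden : 0 < l1 + n * m := by positivity
  set t := l1 / (l1 + n * m) with ht
  have ht0 : 0 < t := by positivity
  have ht1 : t ≤ 1 := by
    rw [ht, div_le_one hden]; nlinarith [mul_nonneg hn.le hm0]
  have htm : t * n * m ≤ l1 := by
    have : t * (l1 + n * m) = l1 := by rw [ht]; field_simp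
    nlinarith [mul_pos ht0 hl1]
  have htn : 0 < t * n := by positivity
  refine ⟨t * n * S i0 i0, mul_pos htn (hSd i0), fun T hT => ?_⟩
  have h0 := jgl_trace_mul_nonneg hS hT
  have h1 : t * n * (S * T).trace ≤ n * (S * T).trace := by
    have : 0 ≤ n * (S * T).trace := mul_nonneg hn.le h0
    nlinarith
  refine le_trans ?_ (add_le_add_left h1 _)
  simp only [Matrix.trace, Matrix.diag, Matrix.mul_apply, Finset.mul_sum,
    ← Finset.sum_add_distrib]
  refine Finset.sum_le_sum fun i _ => ?_
  have hnn : ∀ j, (if i = j then t * n * S i0 i0 * T i i else 0)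
      ≤ t * n * (S i j * T j i) + l1 * (if i ≠ j then |T i j| else 0) := by
    intro j
    by_cases hij : i = j
    · subst hij
      simp only [if_true, ne_eq, not_true_eq_false, if_false, mul_zero, add_zero]
      have := mul_le_mul_of_nonneg_right (hi0 i) (hT.diag_nonneg (i := i))
      nlinarith [mul_le_mul_of_nonneg_left this htn.le]
    · have hsym : T j i = T i j := by simpa using hT.1.apply i j
      simp only [hij, if_false, ne_eq, not_false_eq_true, if_true, hsym]
      have a1 : -(|S i j| * |T i j|) ≤ S i j * T i j := by
        rw [← abs_mul]; exact neg_abs_le _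
      have a2 := mul_le_mul_of_nonneg_right (hmS i j) (abs_nonneg (T i j))
      have a3 : -(m * |T i j|) ≤ S i j * T i j := by linarith
      have a4 := mul_le_mul_of_nonneg_left a3 htn.le
      have a5 := mul_le_mul_of_nonneg_right htm (abs_nonneg (T i j))
      nlinarith
  have := Finset.sum_le_sum (fun j (_ : j ∈ Finset.univ) => hnn j)
  simpa using this

lemma jgl_entry_le {p : ℕ} {T : Matrix (Fin p) (Fin p) ℝ} (hT : T.PosSemidef) (i j : Fin p) :
    |T i j| ≤ T.trace := by
  have hd : ∀ i, T i i ≤ T.trace := fun i =>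
    Finset.single_le_sum (f := fun i => T i i) (fun i _ => hT.diag_nonneg) (Finset.mem_univ i)
  have hsym : T j i = T i j := by simpa using hT.1.apply i j
  have h1 := hT.dotProduct_mulVec_nonneg (Pi.single i 1 + Pi.single j 1)
  have h2 := hT.dotProduct_mulVec_nonneg (Pi.single i 1 - Pi.single j 1)
  simp [Matrix.mulVec_add, Matrix.mulVec_sub, add_dotProduct, sub_dotProduct, hsym] at h1 h2
  have := hd i
  have := hd j
  rw [abs_le]
  constructor <;> linarith

lemma jgl_compact {p : ℕ} (M d : ℝ) :
    IsCompact {T : Matrix (Fin p) (Fin p) ℝ | T.PosSemidef ∧ T.trace ≤ M ∧ d ≤ T.det} := by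
  have hK : IsCompact (Set.univ.pi fun _ : Fin p => Set.univ.pi fun _ : Fin p => Set.Icc (-M) M) :=
    isCompact_univ_pi fun _ => isCompact_univ_pi fun _ => isCompact_Icc
  refine IsCompact.of_isClosed_subset hK ?_ ?_
  · have h1 : IsClosed {T : Matrix (Fin p) (Fin p) ℝ | T.PosSemidef} := by
      have : {T : Matrix (Fin p) (Fin p) ℝ | T.PosSemidef}
          = {T | Tᴴ = T} ∩ ⋂ x : Fin p → ℝ, {T | 0 ≤ star x ⬝ᵥ (T *ᵥ x)} := by
        ext T
        simp [Matrix.posSemidef_iff_dotProduct_mulVec, Matrix.IsHermitian]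
      rw [this]
      refine IsClosed.inter (isClosed_eq (by fun_prop) (by fun_prop)) (isClosed_iInter fun x => ?_)
      exact isClosed_le (by fun_prop) (by fun_prop)
    have h2 : IsClosed {T : Matrix (Fin p) (Fin p) ℝ | T.trace ≤ M} :=
      isClosed_le (continuous_id.matrix_trace) continuous_const
    have h3 : IsClosed {T : Matrix (Fin p) (Fin p) ℝ | d ≤ T.det} :=
      isClosed_le continuous_const (continuous_id.matrix_det)
    exact h1.inter (h2.inter h3)
  · rintro T ⟨hT, hM, -⟩ i - j -
    exact abs_le.mp ((jgl_entry_le hT i j).trans hM)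

lemma jgl_logdet_eps {p : ℕ} {T : Matrix (Fin p) (Fin p) ℝ} (hT : T.PosDef) (e : ℝ) (he : 0 < e) :
    Real.log T.det ≤ e * T.trace - p - p * Real.log e := by
  have h := jgl_logdet_le (hT.smul he)
  rw [det_smul, trace_smul, Real.log_mul (by positivity) hT.det_pos.ne', Real.log_pow] at h
  simp only [Fintype.card_fin, smul_eq_mul] at h
  linarith

lemma jgl_coercive {p : ℕ} (hp : 1 ≤ p) (S : Matrix (Fin p) (Fin p) ℝ) (hS : S.PosSemidef)
    (hSd : ∀ i, 0 < S i i) (n l1 : ℝ) (hn : 0 < n) (hl1 : 0 < l1) :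
    ∃ C : ℝ, ∀ B : ℝ, ∃ U : Set (Matrix (Fin p) (Fin p) ℝ), IsCompact U ∧ (∀ T ∈ U, T.PosDef) ∧
      ∀ T : Matrix (Fin p) (Fin p) ℝ, T.PosDef →
        -C ≤ jglClass n l1 S T ∧ (jglClass n l1 S T ≤ B → T ∈ U) := by
  obtain ⟨c, hc, hlin⟩ := jgl_linear_bound hp S hS hSd n l1 hn hl1
  set e := c / (2 * n) with he
  have he0 : 0 < e := by positivity
  have hne : n * e = c / 2 := by rw [he]; field_simp
  set D := n * (p + p * Real.log e) with hD
  have key : ∀ T : Matrix (Fin p) (Fin p) ℝ, T.PosDef →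
      c / 2 * T.trace + D ≤ jglClass n l1 S T := by
    intro T hT
    have h1 := hlin T hT.posSemidef
    have h2 := mul_le_mul_of_nonneg_left (jgl_logdet_eps hT e he0) hn.le
    have h3 : n * (e * T.trace - p - p * Real.log e) = c / 2 * T.trace - D := by
      rw [hD, ← hne]; ring
    unfold jglClass
    rw [h3] at h2
    linarith
  refine ⟨-D, fun B => ⟨{T | T.PosSemidef ∧ T.trace ≤ (B - D) / (c / 2) ∧
    Real.exp (-(B / n)) ≤ T.det}, jgl_compact _ _, ?_, ?_⟩⟩
  · rintro T ⟨hT, -, hd⟩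
    rw [hT.posDef_iff_det_ne_zero]
    exact ((Real.exp_pos _).trans_le hd).ne'
  · intro T hT
    have hk := key T hT
    have ht := hT.posSemidef.trace_nonneg
    refine ⟨by nlinarith, fun hB => ⟨hT.posSemidef, ?_, ?_⟩⟩
    · rw [le_div_iff₀ (by positivity)]; linarith
    · rw [← Real.le_log_iff_exp_le hT.det_pos, neg_le, le_div_iff₀ hn]
      have h1 := hlin T hT.posSemidef
      have : 0 ≤ c * T.trace := by positivity
      unfold jglClass at hB
      linarith

lemma jgl_sum_le {p K : ℕ} (n : Fin K → ℝ) (S : Fin K → Matrix (Fin p) (Fin p) ℝ)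
    (l1 l2 : ℝ) (hl2 : 0 ≤ l2) (T : Fin K → Matrix (Fin p) (Fin p) ℝ) :
    ∑ k, jglClass (n k) l1 (S k) (T k) ≤ groupJGL n S l1 l2 T := by
  unfold jglClass groupJGL
  rw [Finset.sum_add_distrib, ← Finset.mul_sum]
  have : 0 ≤ l2 * ∑ i, ∑ j, (if i ≠ j then Real.sqrt (∑ k, (T k i j) ^ 2) else 0) := by
    refine mul_nonneg hl2 (Finset.sum_nonneg fun i _ => Finset.sum_nonneg fun j _ => ?_)
    split_ifs
    · exact Real.sqrt_nonneg _
    · exact le_rfl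
  linarith

lemma jgl_continuousOn {p K : ℕ} (n : Fin K → ℝ) (S : Fin K → Matrix (Fin p) (Fin p) ℝ)
    (l1 l2 : ℝ) : ContinuousOn (groupJGL n S l1 l2)
      {T : Fin K → Matrix (Fin p) (Fin p) ℝ | ∀ k, (T k).PosDef} := by
  unfold groupJGL
  have hif : ∀ (i j : Fin p) (f : (Fin K → Matrix (Fin p) (Fin p) ℝ) → ℝ), Continuous f →
      Continuous (fun T => if i ≠ j then f T else 0) := by
    intro i j f hf
    split_ifs
    · exact hf
    · exact continuous_const
  refine ContinuousOn.add (ContinuousOn.add ?_ (Continuous.continuousOn ?_))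
    (Continuous.continuousOn ?_)
  · refine continuousOn_finsetSum _ fun k _ => ContinuousOn.mul continuousOn_const
      (ContinuousOn.add (ContinuousOn.neg (ContinuousOn.log (Continuous.continuousOn ?_) ?_))
        (Continuous.continuousOn ?_))
    · exact (continuous_apply k).matrix_det
    · intro T hT
      exact (hT k).det_pos.ne'
    · fun_prop
  · refine continuous_const.mul (continuous_finsetSum _ fun k _ => continuous_finsetSum _ fun i _ =>
      continuous_finsetSum _ fun j _ => hif i j _ ?_)
    exact ((continuous_apply k).matrix_elem i j).abs
  · refine continuous_const.mul (continuous_finsetSum _ fun i _ =>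
      continuous_finsetSum _ fun j _ => hif i j _ ?_)
    exact (continuous_finsetSum _ fun k _ => ((continuous_apply k).matrix_elem i j).pow 2).sqrt

/-- The group joint graphical lasso objective attains its infimum over `K`-tuples of
symmetric positive definite matrices, and the minimizer is unique. -/
theorem stmt1 {p K : ℕ} (hK : 2 ≤ K) (hp : 1 ≤ p)
    (S : Fin K → Matrix (Fin p) (Fin p) ℝ) (hS : ∀ k, (S k).PosSemidef)
    (hSd : ∀ k i, 0 < S k i i)
    (n : Fin K → ℝ) (hn : ∀ k, 0 < n k)
    (l1 l2 : ℝ) (hl1 : 0 < l1) (hl2 : 0 ≤ l2) :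
    ∃! Θ : Fin K → Matrix (Fin p) (Fin p) ℝ,
      (∀ k, (Θ k).PosDef) ∧
        ∀ Θ' : Fin K → Matrix (Fin p) (Fin p) ℝ, (∀ k, (Θ' k).PosDef) →
          groupJGL n S l1 l2 Θ ≤ groupJGL n S l1 l2 Θ' := by
  have hex := fun k => jgl_coercive hp (S k) (hS k) (hSd k) (n k) l1 (hn k) hl1
  choose C hC using hex
  set F := groupJGL n S l1 l2 with hF
  let I : Fin K → Matrix (Fin p) (Fin p) ℝ := fun _ => 1
  have hI : ∀ k, (I k).PosDef := fun _ => Matrix.PosDef.one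
  have hUex := fun k => hC k (F I + ∑ l, |C l|)
  choose U hUc hUp hU using hUex
  have hmem : ∀ T : Fin K → Matrix (Fin p) (Fin p) ℝ, (∀ k, (T k).PosDef) → F T ≤ F I →
      T ∈ Set.univ.pi U := by
    intro T hT hle k _
    refine (hU k (T k) (hT k)).2 ?_
    have h1 := jgl_sum_le n S l1 l2 hl2 T
    have hnn : ∀ l, 0 ≤ jglClass (n l) l1 (S l) (T l) + |C l| := fun l => by
      have := (hU l (T l) (hT l)).1
      have := le_abs_self (C l)
      linarith
    have h2 := Finset.single_le_sum (f := fun l => jglClass (n l) l1 (S l) (T l) + |C l|)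
      (fun l _ => hnn l) (Finset.mem_univ k)
    rw [Finset.sum_add_distrib] at h2
    have := abs_nonneg (C k)
    linarith
  obtain ⟨T, hTU, hTmin⟩ := (isCompact_univ_pi hUc).exists_isMinOn ⟨I, hmem I hI le_rfl⟩
    ((jgl_continuousOn n S l1 l2).mono fun T hT k => hUp k _ (hT k (Set.mem_univ k)))
  have hTp : ∀ k, (T k).PosDef := fun k => hUp k _ (hTU k (Set.mem_univ k))
  have hmin : ∀ T' : Fin K → Matrix (Fin p) (Fin p) ℝ, (∀ k, (T' k).PosDef) → F T ≤ F T' := by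
    intro T' hT'
    by_cases h : F T' ≤ F I
    · exact hTmin (hmem T' hT' h)
    · exact (hTmin (hmem I hI le_rfl)).trans (not_le.mp h).le
  refine ⟨T, ⟨hTp, hmin⟩, ?_⟩
  rintro A ⟨hA, hAmin⟩
  by_contra hne
  have h1 := jgl_mid_obj S n hn l1 l2 hl1 hl2 A T hA hTp hne
  have h2 := hmin _ (fun k => jgl_mid_posDef (hA k) (hTp k))
  have h3 := hAmin T hTp
  rw [← hF] at h1
  linarith
end

section
/- Let S ∈ ℝ^{p×p} be symmetric positive semidefinite, λ > 0, and let Θ* be a symmetric positive definite minimizer of the graphical lasso objective F over symmetric positive definite p×p matrices. Let Θ be symmetric positive definite, let η > 0, and define the update Θ' entrywise by Θ'_{ij} = S_{ηλ}((Θ − η(S − Θ^{−1}))_{ij}) for i ≠ j and Θ'_{ii} = (Θ − η(S − Θ^{−1}))_{ii}, where S_{ηλ} is the soft-thresholding operator. Set a := min(λ_min(Θ*), λ_min(Θ)), b := max(λ_max(Θ*), λ_max(Θ)), and γ := max(|1 − η/b²|, |1 − η/a²|), with λ_min and λ_max the smallest and largest eigenvalues. Then ‖Θ' − Θ*‖_F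 ≤ γ ‖Θ − Θ*‖_F. -/
open Matrix Finset

/-- The graphical lasso objective `F(Θ) = -log det Θ + trace(SΘ) + λ Σ_{i≠j} |θ_ij|`. -/
noncomputable def glObj {p : ℕ} (S : Matrix (Fin p) (Fin p) ℝ) (l : ℝ)
    (Θ : Matrix (Fin p) (Fin p) ℝ) : ℝ :=
  -Real.log Θ.det + (S * Θ).trace + l * ∑ i, ∑ j, (if i ≠ j then |Θ i j| else 0)

/-- The soft-thresholding operator with threshold `t`. -/
noncomputable def softTh (t z : ℝ) : ℝ := Real.sign z * max (|z| - t) 0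

/-- The Frobenius norm of a real matrix. -/
noncomputable def frob {p : ℕ} (A : Matrix (Fin p) (Fin p) ℝ) : ℝ :=
  Real.sqrt (∑ i, ∑ j, (A i j) ^ 2)

lemma softTh_eq {t : ℝ} (ht : 0 ≤ t) (z : ℝ) :
    softTh t z = max (z - t) 0 - max (-z - t) 0 := by
  unfold softTh
  rcases lt_trichotomy z 0 with h | h | h
  · rw [Real.sign_of_neg h, abs_of_neg h, max_eq_right (by linarith : z - t ≤ 0)]; ring
  · subst h; simp
  · rw [Real.sign_of_pos h, abs_of_pos h, max_eq_right (by linarith : -z - t ≤ 0)]; ring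

lemma softTh_nonexp {t : ℝ} (ht : 0 ≤ t) (x y : ℝ) :
    |softTh t x - softTh t y| ≤ |x - y| := by
  rw [softTh_eq ht, softTh_eq ht]
  rcases max_cases (x - t) 0 with h1 | h1 <;> rcases max_cases (-x - t) 0 with h2 | h2 <;>
  rcases max_cases (y - t) 0 with h3 | h3 <;> rcases max_cases (-y - t) 0 with h4 | h4 <;>
  rcases abs_cases (x - y) with h5 | h5 <;>
  rw [h1.1, h2.1, h3.1, h4.1, h5.1, abs_le] <;> constructor <;> linarith

lemma one_dim {h : ℝ → ℝ} {d c θ : ℝ} (hc : 0 ≤ c) (hd : HasDerivAt h d 0)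
    (hm : ∀ᶠ t in nhds (0:ℝ), h 0 + c * |θ| ≤ h t + c * |θ + t|) :
    (0 < θ → d = -c) ∧ (θ < 0 → d = c) ∧ (θ = 0 → |d| ≤ c) := by
  refine ⟨fun hθ => ?_, fun hθ => ?_, fun hθ => ?_⟩
  · have h1 : HasDerivAt (fun t => h t + c * (θ + t)) (d + c * 1) 0 :=
      hd.add (((hasDerivAt_id (0:ℝ)).const_add θ).const_mul c)
    have h2 : IsLocalMin (fun t => h t + c * (θ + t)) 0 := by
      filter_upwards [hm, lt_mem_nhds (show -θ < 0 by linarith)] with t ht ht2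
      rw [abs_of_pos hθ, abs_of_pos (by linarith)] at ht
      simpa using ht
    have := h2.hasDerivAt_eq_zero h1
    linarith
  · have h1 : HasDerivAt (fun t => h t + (-c) * (θ + t)) (d + (-c) * 1) 0 :=
      hd.add (((hasDerivAt_id (0:ℝ)).const_add θ).const_mul (-c))
    have h2 : IsLocalMin (fun t => h t + (-c) * (θ + t)) 0 := by
      filter_upwards [hm, gt_mem_nhds (show 0 < -θ by linarith)] with t ht ht2
      rw [abs_of_neg hθ, abs_of_neg (by linarith)] at ht
      simp only [add_zero]; linarith
    have := h2.hasDerivAt_eq_zero h1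
    linarith
  · subst hθ
    have hs := hd.tendsto_slope_zero
    simp only [abs_zero, mul_zero, add_zero, zero_add] at hm hs
    rw [abs_le]; constructor
    · refine ge_of_tendsto (hs.mono_left (nhdsWithin_mono 0 (t := {0}ᶜ) (s := Set.Ioi 0) (fun x hx => ne_of_gt hx))) ?_
      filter_upwards [nhdsWithin_le_nhds hm, self_mem_nhdsWithin] with t ht ht0
      have ht0 : 0 < t := ht0
      rw [abs_of_pos ht0] at ht
      rw [smul_eq_mul, inv_mul_eq_div, le_div_iff₀ ht0]; linarith
    · refine le_of_tendsto (hs.mono_left (nhdsWithin_mono 0 (t := {0}ᶜ) (s := Set.Iio 0) (fun x hx => ne_of_lt hx))) ?_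
      filter_upwards [nhdsWithin_le_nhds hm, self_mem_nhdsWithin] with t ht ht0
      have ht0 : t < 0 := ht0
      rw [abs_of_neg ht0] at ht
      rw [smul_eq_mul, inv_mul_eq_div, div_le_iff_of_neg ht0]; linarith

lemma softTh_fix {η l g θ : ℝ} (hη : 0 < η) (hl : 0 < l)
    (h : (0 < θ → g = -l) ∧ (θ < 0 → g = l) ∧ (θ = 0 → |g| ≤ l)) :
    softTh (η * l) (θ - η * g) = θ := by
  have hp : 0 < η * l := by positivity
  rw [softTh_eq hp.le]
  rcases lt_trichotomy θ 0 with h0 | h0 | h0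
  · rw [h.2.1 h0, max_eq_right (by linarith), max_eq_left (by linarith)]; ring
  · have := abs_le.1 (h.2.2 h0)
    subst h0
    rw [max_eq_right, max_eq_right]
    · ring
    · nlinarith
    · nlinarith
  · rw [h.1 h0, max_eq_left (by linarith), max_eq_right (by linarith)]; ring

lemma spec {p : ℕ} {M : Matrix (Fin p) (Fin p) ℝ} (hM : M.IsHermitian) :
    ∃ U : Matrix (Fin p) (Fin p) ℝ, M = U * diagonal hM.eigenvalues * Uᵀ ∧ U * Uᵀ = 1 ∧ Uᵀ * U = 1 := by
  refine ⟨hM.eigenvectorUnitary, ?_, ?_, ?_⟩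
  · have := hM.spectral_theorem
    rw [Unitary.conjStarAlgAut_apply] at this
    simpa [Matrix.star_eq_conjTranspose, Function.comp_def] using this
  · have := Unitary.coe_mul_star_self hM.eigenvectorUnitary
    simpa [Matrix.star_eq_conjTranspose] using this
  · have := Unitary.coe_star_mul_self hM.eigenvectorUnitary
    simpa [Matrix.star_eq_conjTranspose] using this

lemma shift_psd {p : ℕ} {M : Matrix (Fin p) (Fin p) ℝ} (hM : M.IsHermitian) (c : ℝ)
    (hc : ∀ i, 0 ≤ hM.eigenvalues i + c) : (M + c • 1).PosSemidef := by
  obtain ⟨U, h1, h2, h3⟩ := spec hM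
  have : M + c • 1 = U * diagonal (fun i => hM.eigenvalues i + c) * Uᴴ := by
    have e : diagonal (fun i => hM.eigenvalues i + c) = diagonal hM.eigenvalues + c • 1 := by
      rw [← Matrix.diagonal_one, ← Matrix.diagonal_smul, Matrix.diagonal_add]; simp
    rw [e, mul_add, add_mul, Matrix.conjTranspose_eq_transpose_of_trivial, ← h1]; simp [h2]
  rw [this]
  exact (PosSemidef.diagonal hc).mul_mul_conjTranspose_same U

lemma perturb {p : ℕ} {M E : Matrix (Fin p) (Fin p) ℝ} (hM : M.PosDef) (hE : E.IsHermitian) :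
    ∀ᶠ t in nhds (0:ℝ), (M + t • E).PosDef := by
  obtain ⟨m, hm, hmd⟩ : ∃ m : ℝ, 0 < m ∧ ∀ i, m ≤ hM.1.eigenvalues i := by
    rcases isEmpty_or_nonempty (Fin p) with h | h
    · exact ⟨1, one_pos, fun i => h.elim i⟩
    · obtain ⟨i, hi⟩ := Finite.exists_min hM.1.eigenvalues
      exact ⟨_, hM.eigenvalues_pos i, hi⟩
  have hE' : (-E).IsHermitian := hE.neg
  have key : ∀ {E : Matrix (Fin p) (Fin p) ℝ}, E.IsHermitian → ∃ c : ℝ, 0 < c ∧ (E + c • 1).PosSemidef := by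
    intro E hE
    refine ⟨∑ i, |hE.eigenvalues i| + 1, by positivity, shift_psd hE _ fun i => ?_⟩
    have := Finset.single_le_sum (f := fun i => |hE.eigenvalues i|) (fun i _ => abs_nonneg _) (Finset.mem_univ i)
    have := neg_abs_le (hE.eigenvalues i)
    linarith
  have h0 := shift_psd hM.1 (-m) (fun i => by linarith [hmd i])
  obtain ⟨c, hc, h1⟩ := key hE
  obtain ⟨c', hc', h2⟩ := key hE'
  have main : ∀ (E : Matrix (Fin p) (Fin p) ℝ) (c t : ℝ), 0 < c → 0 ≤ t → t < m / c →
      (E + c • 1).PosSemidef → (M + t • E).PosDef := by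
    intro E c t hc ht htm hp
    rw [lt_div_iff₀ hc] at htm
    have e : M + t • E = ((M + (-m) • 1) + t • (E + c • 1)) + (m - t * c) • 1 := by
      ext i j; simp; ring
    rw [e]
    exact PosDef.posSemidef_add (h0.add (hp.smul ht)) (PosDef.one.smul (by linarith))
  filter_upwards [gt_mem_nhds (show 0 < m / c by positivity), lt_mem_nhds (show -(m / c') < 0 by simp; positivity)] with t ht1 ht2
  rcases le_total 0 t with h | h
  · exact main E c t hc h ht1 h1
  · have := main (-E) c' (-t) hc' (by linarith) (by linarith) h2
    simpa using this

lemma logdet_deriv {p : ℕ} {M : Matrix (Fin p) (Fin p) ℝ} (E : Matrix (Fin p) (Fin p) ℝ) (hM : M.PosDef) :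
    HasDerivAt (fun t : ℝ => Real.log (M + t • E).det) (M⁻¹ * E).trace 0 := by
  have hd := hM.det_pos
  have hu : IsUnit M.det := hd.ne'.isUnit
  have e : ∀ t : ℝ, (M + t • E).det = M.det * (1 + t • (M⁻¹ * E)).det := by
    intro t
    rw [← det_mul, mul_add, mul_smul_comm, ← mul_assoc, mul_nonsing_inv _ hu]; simp
  have h1 : HasDerivAt (fun t : ℝ => (1 + t • (M⁻¹ * E)).det) (M⁻¹ * E).trace 0 := by
    rw [funext fun t : ℝ => det_one_add_smul t (M⁻¹ * E)]
    set q := (det (1 + (Polynomial.X : Polynomial ℝ) • (M⁻¹ * E).map Polynomial.C)).divX.divX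
    have a1 := ((hasDerivAt_id (0:ℝ)).const_mul (M⁻¹ * E).trace).const_add 1
    have a2 := (q.hasDerivAt 0).mul (hasDerivAt_pow 2 (0:ℝ))
    exact (a1.add a2).congr_deriv (by simp)
  have h2 := (h1.const_mul M.det).log (by simp [hd.ne'])
  simp_rw [e]
  convert h2 using 1
  simp [hd.ne']

lemma opt {p : ℕ} (S : Matrix (Fin p) (Fin p) ℝ) (hS : S.IsHermitian) (l : ℝ) (hl : 0 < l)
    (M : Matrix (Fin p) (Fin p) ℝ) (hM : M.PosDef)
    (hmin : ∀ Θ : Matrix (Fin p) (Fin p) ℝ, Θ.PosDef → glObj S l M ≤ glObj S l Θ) :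
    (∀ i, S i i - M⁻¹ i i = 0) ∧ ∀ i j, i ≠ j →
      ((0 < M i j → S i j - M⁻¹ i j = -l) ∧ (M i j < 0 → S i j - M⁻¹ i j = l) ∧
        (M i j = 0 → |S i j - M⁻¹ i j| ≤ l)) := by
  have hD : ∀ E : Matrix (Fin p) (Fin p) ℝ,
      HasDerivAt (fun t : ℝ => -Real.log (M + t • E).det + (S * (M + t • E)).trace)
        (-(M⁻¹ * E).trace + (S * E).trace) 0 := by
    intro E
    refine (logdet_deriv E hM).neg.add ?_
    have : HasDerivAt (fun t : ℝ => (S * M).trace + t * (S * E).trace) (1 * (S * E).trace) 0 :=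
      ((hasDerivAt_id (0:ℝ)).mul_const _).const_add _
    simpa [mul_add, trace_add, trace_smul] using this
  constructor
  · intro i
    have hE : (single i i (1:ℝ)).IsHermitian := by
      rw [Matrix.IsHermitian]; simp [Matrix.conjTranspose_single]
    have := one_dim (c := 0) (θ := 0) le_rfl (hD (single i i (1:ℝ))) (by
      filter_upwards [perturb hM hE] with t ht
      have := hmin _ ht
      unfold glObj at this
      have e : ∑ k, ∑ j, (if k ≠ j then |(M + t • single i i (1:ℝ)) k j| else 0)
        = ∑ k, ∑ j, (if k ≠ j then |M k j| else 0) := by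
        refine Finset.sum_congr rfl fun k _ => Finset.sum_congr rfl fun j _ => ?_
        split_ifs with h
        · have : ¬ (i = k ∧ i = j) := fun ⟨a, b⟩ => h (a ▸ b)
          simp [Matrix.single_apply, this]
        · rfl
      rw [e] at this
      simp only [zero_mul, add_zero, zero_smul]
      linarith)
    have := this.2.2 rfl
    have := abs_nonpos_iff.1 this
    simp [Matrix.trace_mul_single] at this
    linarith
  · intro i j hij
    set E : Matrix (Fin p) (Fin p) ℝ := single i j 1 + single j i 1 with hEdef
    have hE : E.IsHermitian := by
      rw [Matrix.IsHermitian, hEdef]; simp [Matrix.conjTranspose_single, add_comm]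
    have hsym : ∀ {N : Matrix (Fin p) (Fin p) ℝ}, N.IsHermitian → N j i = N i j := by
      intro N hN
      simpa using hN.apply i j
    have := one_dim (c := 2 * l) (θ := M i j) (by positivity) (hD E) (by
      filter_upwards [perturb hM hE] with t ht
      have := hmin _ ht
      unfold glObj at this
      have e : ∑ k, ∑ j, (if k ≠ j then |(M + t • E) k j| else 0)
        = ∑ k, ∑ j, (if k ≠ j then |M k j| else 0) + 2 * (|M i j + t| - |M i j|) := by
        have : ∀ k m, (if k ≠ m then |(M + t • E) k m| else 0) = (if k ≠ m then |M k m| else 0)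
            + (single i j (|M i j + t| - |M i j|) k m + single j i (|M i j + t| - |M i j|) k m) := by
          intro k m
          by_cases h1 : i = k ∧ j = m
          · obtain ⟨rfl, rfl⟩ := h1
            simp [hij, hEdef, hij.symm]
          · by_cases h2 : j = k ∧ i = m
            · obtain ⟨rfl, rfl⟩ := h2
              simp [hij, hEdef, hij.symm, hsym hM.1]
            · simp [hEdef, Matrix.single_apply, h1, h2]
        simp_rw [this, Finset.sum_add_distrib]
        have s : ∀ (i j : Fin p) (c : ℝ), ∑ k, ∑ m, single i j c k m = c := by
          intro i j c
          rw [Finset.sum_eq_single i, Finset.sum_eq_single j]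
          · simp
          · intro b _ hb; simp [hb.symm]
          · simp
          · intro b _ hb; simp [hb.symm]
          · simp
        rw [s, s]; ring
      rw [e] at this
      simp only [zero_smul, add_zero]
      linarith)
    have hd : -(M⁻¹ * E).trace + (S * E).trace = 2 * (S i j - M⁻¹ i j) := by
      rw [hEdef]
      simp [mul_add, trace_add, Matrix.trace_mul_single, hsym hS, hsym hM.inv.1]
      ring
    rw [hd] at this
    refine ⟨fun h => ?_, fun h => ?_, fun h => ?_⟩
    · linarith [this.1 h]
    · linarith [this.2.1 h]
    · have := this.2.2 h
      rw [abs_mul, abs_two] at this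
      linarith

lemma fsq_trace {p : ℕ} (X : Matrix (Fin p) (Fin p) ℝ) : ∑ i, ∑ j, X i j ^ 2 = (X * Xᵀ).trace := by
  simp [Matrix.trace, Matrix.mul_apply, pow_two]

lemma fsq_inv {p : ℕ} (X U V : Matrix (Fin p) (Fin p) ℝ) (hU : U * Uᵀ = 1) (hV : V * Vᵀ = 1) :
    ∑ i, ∑ j, (Uᵀ * X * V) i j ^ 2 = ∑ i, ∑ j, X i j ^ 2 := by
  rw [fsq_trace, fsq_trace]
  have : Uᵀ * X * V * (Uᵀ * X * V)ᵀ = Uᵀ * (X * Xᵀ * U) := by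
    simp only [transpose_mul, transpose_transpose]
    calc _ = Uᵀ * X * (V * Vᵀ) * Xᵀ * U := by simp only [mul_assoc]
      _ = _ := by rw [hV]; simp only [mul_assoc, mul_one]
  rw [this, trace_mul_comm, mul_assoc, hU, mul_one]

lemma inv_spec {p : ℕ} {M : Matrix (Fin p) (Fin p) ℝ} {d : Fin p → ℝ} (hd : ∀ i, 0 < d i) {U : Matrix (Fin p) (Fin p) ℝ}
    (h : M = U * diagonal d * Uᵀ) (h1 : U * Uᵀ = 1) (h2 : Uᵀ * U = 1) :
    Uᵀ * M⁻¹ = diagonal (fun i => (d i)⁻¹) * Uᵀ ∧ M⁻¹ * U = U * diagonal (fun i => (d i)⁻¹) := by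
  have : M⁻¹ = U * diagonal (fun i => (d i)⁻¹) * Uᵀ := by
    apply inv_eq_right_inv
    rw [h]
    calc _ = U * (diagonal d * (Uᵀ * U) * diagonal (fun i => (d i)⁻¹)) * Uᵀ := by simp only [mul_assoc]
      _ = _ := by
        rw [h2, mul_one, diagonal_mul_diagonal]
        simp [(hd _).ne', h1]
  rw [this]
  constructor
  · rw [mul_assoc, ← mul_assoc, h2, one_mul]
  · rw [mul_assoc, h2, mul_one]

lemma gamma_bound {a b η t : ℝ} (ha : 0 < a) (hη : 0 < η) (h1 : a ^ 2 ≤ t) (h2 : t ≤ b ^ 2) :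
    |1 - η * t⁻¹| ≤ max |1 - η / b ^ 2| |1 - η / a ^ 2| := by
  have ht : 0 < t := lt_of_lt_of_le (by positivity) h1
  have e1 : η * t⁻¹ ≤ η / a ^ 2 := by rw [← div_eq_mul_inv]; gcongr
  have e2 : η / b ^ 2 ≤ η * t⁻¹ := by rw [← div_eq_mul_inv]; gcongr
  rw [le_max_iff]
  rcases abs_cases (1 - η * t⁻¹) with h | h
  · left; rw [h.1]; exact le_trans (by linarith) (le_abs_self _)
  · right; rw [h.1]; exact le_trans (by linarith) (neg_le_abs _)

/-- Contraction property of one ISTA step for the graphical lasso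
(Lemma 3 of Guillot et al., G-ISTA). -/
theorem stmt4 {p : ℕ} (hp : 0 < p)
    (S : Matrix (Fin p) (Fin p) ℝ) (hS : S.PosSemidef) (l : ℝ) (hl : 0 < l)
    (Θs : Matrix (Fin p) (Fin p) ℝ) (hΘs : Θs.PosDef)
    (hmin : ∀ Θ : Matrix (Fin p) (Fin p) ℝ, Θ.PosDef → glObj S l Θs ≤ glObj S l Θ)
    (Θ : Matrix (Fin p) (Fin p) ℝ) (hΘ : Θ.PosDef)
    (η : ℝ) (hη : 0 < η)
    (A Θ' : Matrix (Fin p) (Fin p) ℝ)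
    (hA : A = Θ - η • (S - Θ⁻¹))
    (hΘ' : Θ' = Matrix.of fun i j => if i = j then A i j else softTh (η * l) (A i j))
    (a b γ : ℝ)
    (ha : a = min (⨅ i, hΘs.1.eigenvalues i) (⨅ i, hΘ.1.eigenvalues i))
    (hb : b = max (⨆ i, hΘs.1.eigenvalues i) (⨆ i, hΘ.1.eigenvalues i))
    (hγ : γ = max |1 - η / b ^ 2| |1 - η / a ^ 2|) :
    frob (Θ' - Θs) ≤ γ * frob (Θ - Θs) := by
  have : Nonempty (Fin p) := ⟨⟨0, hp⟩⟩
  obtain ⟨o1, o2⟩ := opt S hS.1 l hl Θs hΘs hmin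
  set X := Θ - Θs with hX
  have hdiff : Θ⁻¹ - Θs⁻¹ = -(Θ⁻¹ * X * Θs⁻¹) := by
    have u1 : IsUnit Θ.det := hΘ.det_pos.ne'.isUnit
    have u2 : IsUnit Θs.det := hΘs.det_pos.ne'.isUnit
    rw [hX, mul_sub, sub_mul, nonsing_inv_mul _ u1, mul_assoc, mul_nonsing_inv _ u2]
    simp
  have hγ0 : 0 ≤ γ := by rw [hγ]; exact le_max_of_le_left (abs_nonneg _)
  set Z := X - η • (Θ⁻¹ * X * Θs⁻¹) with hZ
  have hZ' : Z = A - (Θs - η • (S - Θs⁻¹)) := by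
    rw [hZ, hA, ← neg_neg (Θ⁻¹ * X * Θs⁻¹), ← hdiff, hX]
    ext i j; simp; ring
  have step1 : ∑ i, ∑ j, (Θ' - Θs) i j ^ 2 ≤ ∑ i, ∑ j, Z i j ^ 2 := by
    refine Finset.sum_le_sum fun i _ => Finset.sum_le_sum fun j _ => ?_
    rw [sq_le_sq]
    have hz : Z i j = A i j - (Θs i j - η * (S i j - Θs⁻¹ i j)) := by rw [hZ']; simp
    rw [hz]
    by_cases hij : i = j
    · subst hij
      have := o1 i
      simp [hΘ', this]
    · have hf := softTh_fix hη hl (o2 i j hij)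
      simp only [hΘ', Matrix.sub_apply, of_apply, hij, if_false]
      conv_lhs => rw [← hf]
      exact softTh_nonexp (by positivity) _ _
  have hds := hΘs.eigenvalues_pos
  have hd := hΘ.eigenvalues_pos
  obtain ⟨U, u1, u2, u3⟩ := spec hΘ.1
  obtain ⟨V, v1, v2, v3⟩ := spec hΘs.1
  have iU := (inv_spec hd u1 u2 u3).1
  have iV := (inv_spec hds v1 v2 v3).2
  have ha0 : 0 < a := by
    rw [ha, lt_min_iff]
    constructor
    · obtain ⟨i, hi⟩ := exists_eq_ciInf_of_finite (f := hΘs.1.eigenvalues)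
      rw [← hi]; exact hds i
    · obtain ⟨i, hi⟩ := exists_eq_ciInf_of_finite (f := hΘ.1.eigenvalues)
      rw [← hi]; exact hd i
  have la : ∀ i, a ≤ hΘ.1.eigenvalues i := fun i => by
    rw [ha]; exact (min_le_right _ _).trans (ciInf_le (Set.finite_range _).bddBelow i)
  have las : ∀ i, a ≤ hΘs.1.eigenvalues i := fun i => by
    rw [ha]; exact (min_le_left _ _).trans (ciInf_le (Set.finite_range _).bddBelow i)
  have lb : ∀ i, hΘ.1.eigenvalues i ≤ b := fun i => by
    rw [hb]; exact le_trans (le_ciSup (Set.finite_range _).bddAbove i) (le_max_right _ _)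
  have lbs : ∀ i, hΘs.1.eigenvalues i ≤ b := fun i => by
    rw [hb]; exact le_trans (le_ciSup (Set.finite_range _).bddAbove i) (le_max_left _ _)
  have step2 : ∑ i, ∑ j, Z i j ^ 2 ≤ γ ^ 2 * ∑ i, ∑ j, X i j ^ 2 := by
    rw [← fsq_inv Z U V u2 v2, ← fsq_inv X U V u2 v2]
    have eZ : Uᵀ * Z * V = Uᵀ * X * V - η • (diagonal (fun i => (hΘ.1.eigenvalues i)⁻¹) * (Uᵀ * X * V) * diagonal (fun i => (hΘs.1.eigenvalues i)⁻¹)) := by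
      rw [hZ, mul_sub, sub_mul, mul_smul_comm, smul_mul_assoc]
      congr 2
      calc _ = (Uᵀ * Θ⁻¹) * X * (Θs⁻¹ * V) := by simp only [mul_assoc]
        _ = _ := by rw [iU, iV]; simp only [mul_assoc]
    rw [eZ]
    simp_rw [Finset.mul_sum]
    refine Finset.sum_le_sum fun i _ => Finset.sum_le_sum fun j _ => ?_
    rw [Matrix.sub_apply, Matrix.smul_apply, mul_diagonal, diagonal_mul, smul_eq_mul]
    generalize (Uᵀ * X * V) i j = y
    have hb := gamma_bound (b := b) (t := hΘ.1.eigenvalues i * hΘs.1.eigenvalues j) ha0 hη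
      (by rw [pow_two]; exact mul_le_mul (la i) (las j) ha0.le (hd i).le)
      (by rw [pow_two]; exact mul_le_mul (lb i) (lbs j) (hds j).le ((hd i).le.trans (lb i)))
    rw [← hγ, mul_inv] at hb
    have : y - η * ((hΘ.1.eigenvalues i)⁻¹ * y * (hΘs.1.eigenvalues j)⁻¹) =
      (1 - η * ((hΘ.1.eigenvalues i)⁻¹ * (hΘs.1.eigenvalues j)⁻¹)) * y := by ring
    rw [this, mul_pow]
    refine mul_le_mul_of_nonneg_right ?_ (sq_nonneg y)
    rw [sq_le_sq, abs_of_nonneg hγ0]; exact hb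
  unfold frob
  rw [← Real.sqrt_sq hγ0, ← Real.sqrt_mul (sq_nonneg γ)]
  exact Real.sqrt_le_sqrt (step1.trans step2)
end

section
/- Fix K ≥ 1, a ∈ ℝ^K, α₁ > 0 and α₂ ≥ 0. For θ ∈ ℝ^K define L(θ; α₁) = (1/2) Σ_{k=1}^K (θ_k − a_k)² + α₁ Σ_{k=1}^K |θ_k| + α₂ Σ_{k≠l} |θ_k − θ_l|. If θ̂(0) is the unique minimizer of L(·; 0) (the problem with no ℓ1 term), then the unique minimizer of L(·; α₁) is given componentwise by soft-thresholding: θ̂(α₁)_k = S_{α₁}(θ̂(0)_k) = sign(θ̂(0)_k)·max(|θ̂(0)_k| − α₁, 0) for every k = 1,…,K. -/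
open Finset

/-- The fused lasso signal approximator objective with data `a`, ℓ1 parameter `t`
and fusion parameter `α2`. -/
noncomputable def flsa {K : ℕ} (a : Fin K → ℝ) (α2 t : ℝ) (θ : Fin K → ℝ) : ℝ :=
  (1 / 2) * ∑ k, (θ k - a k) ^ 2 + t * ∑ k, |θ k|
    + α2 * ∑ k, ∑ l, (if k ≠ l then |θ k - θ l| else 0)

lemma softTh_cases (t z : ℝ) (ht : 0 < t) :
    (t < z ∧ softTh t z = z - t) ∨ (-t ≤ z ∧ z ≤ t ∧ softTh t z = 0) ∨
      (z < -t ∧ softTh t z = z + t) := by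
  unfold softTh
  rcases lt_or_ge t z with h | h
  · left
    have hz : 0 < z := ht.trans h
    rw [Real.sign_of_pos hz, abs_of_pos hz, max_eq_left (by linarith)]
    exact ⟨h, by ring⟩
  · rcases lt_or_ge z (-t) with h' | h'
    · right; right
      have hz : z < 0 := by linarith
      rw [Real.sign_of_neg hz, abs_of_neg hz, max_eq_left (by linarith)]
      exact ⟨h', by ring⟩
    · right; left
      have : |z| ≤ t := abs_le.mpr ⟨h', h⟩
      rw [max_eq_right (by linarith)]
      exact ⟨h', h, by ring⟩

lemma softTh_split (t x y : ℝ) (ht : 0 < t) :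
    |x - y| = |softTh t x - softTh t y| + |(x - softTh t x) - (y - softTh t y)| := by
  have key : ∀ u v : ℝ, 0 ≤ u * v → |u + v| = |u| + |v| := by
    intro u v h
    rw [abs_add_eq_add_abs_iff]
    rcases mul_nonneg_iff.mp h with h | h
    · exact Or.inl h
    · exact Or.inr h
  rw [← key]
  · congr 1; ring
  · rcases softTh_cases t x ht with ⟨a1, a2⟩ | ⟨a1, a3, a2⟩ | ⟨a1, a2⟩ <;>
    rcases softTh_cases t y ht with ⟨b1, b2⟩ | ⟨b1, b3, b2⟩ | ⟨b1, b2⟩ <;>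
    rw [a2, b2] <;>
    first
    | (apply mul_nonneg <;> linarith)
    | (apply mul_nonneg_of_nonpos_of_nonpos <;> linarith)
    | nlinarith

lemma softTh_sub (t x z : ℝ) (ht : 0 < t) :
    t * |softTh t x| + (x - softTh t x) * (z - softTh t x) ≤ t * |z| := by
  have hz1 := le_abs_self z
  have hz2 := neg_abs_le z
  have hz3 := abs_nonneg z
  rcases softTh_cases t x ht with ⟨a1, a2⟩ | ⟨a1, a3, a2⟩ | ⟨a1, a2⟩ <;> rw [a2]
  · rw [abs_of_pos (by linarith)]; nlinarith
  · simp only [abs_zero, sub_zero, mul_zero, zero_add]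
    calc x * z ≤ |x * z| := le_abs_self _
      _ = |x| * |z| := abs_mul _ _
      _ ≤ t * |z| := mul_le_mul_of_nonneg_right (abs_le.mpr ⟨a1, a3⟩) hz3
  · rw [abs_of_neg (by linarith)]; nlinarith

lemma lim_aux (c q : ℝ) (hq : 0 ≤ q) (h : ∀ t : ℝ, 0 < t → t ≤ 1 → 0 ≤ t * c + t ^ 2 * q) :
    0 ≤ c := by
  by_contra hc
  push Not at hc
  have hd : 0 < q + 1 - c := by linarith
  have ht : 0 < -c / (q + 1 - c) := div_pos (by linarith) hd
  have h2 := h _ ht (by rw [div_le_one hd]; linarith)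
  set s := -c / (q + 1 - c) with hs
  have hs' : s * (q + 1 - c) = -c := by rw [hs]; field_simp
  have h3 : 0 ≤ c + s * q := by
    by_contra h4
    push Not at h4
    nlinarith
  nlinarith

/-- fusion penalty -/
noncomputable def fusP {K : ℕ} (α2 : ℝ) (θ : Fin K → ℝ) : ℝ :=
  α2 * ∑ k, ∑ l, |θ k - θ l|

lemma flsa_eq {K : ℕ} (a : Fin K → ℝ) (α2 t : ℝ) (θ : Fin K → ℝ) :
    flsa a α2 t θ = (1 / 2) * ∑ k, (θ k - a k) ^ 2 + t * ∑ k, |θ k| + fusP α2 θ := by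
  unfold flsa fusP
  congr 2
  refine Finset.sum_congr rfl fun k _ => Finset.sum_congr rfl fun l _ => ?_
  by_cases h : k = l
  · subst h; simp
  · simp [h]

lemma fusP_add {K : ℕ} (α2 t : ℝ) (h2 : 0 ≤ α2) (ht : 0 ≤ t) (x y : Fin K → ℝ) :
    fusP α2 (fun k => x k + t * y k) ≤ fusP α2 x + t * fusP α2 y := by
  have : fusP α2 x + t * fusP α2 y
      = α2 * ∑ k, ∑ l, (|x k - x l| + t * |y k - y l|) := by
    unfold fusP
    simp only [Finset.sum_add_distrib, ← Finset.mul_sum]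
    ring
  rw [this]
  refine mul_le_mul_of_nonneg_left ?_ h2
  refine Finset.sum_le_sum fun k _ => Finset.sum_le_sum fun l _ => ?_
  calc |x k + t * y k - (x l + t * y l)| = |(x k - x l) + t * (y k - y l)| := by congr 1; ring
    _ ≤ |x k - x l| + |t * (y k - y l)| := abs_add_le _ _
    _ = _ := by rw [abs_mul, abs_of_nonneg ht]

lemma fusP_shrink {K : ℕ} (α2 t : ℝ) (ht : t ≤ 1) (x : Fin K → ℝ) :
    fusP α2 (fun k => x k + t * (- x k)) = (1 - t) * fusP α2 x := by
  unfold fusP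
  rw [mul_left_comm, Finset.mul_sum (a := 1 - t)]
  congr 1
  refine Finset.sum_congr rfl fun k _ => ?_
  rw [Finset.mul_sum]
  refine Finset.sum_congr rfl fun l _ => ?_
  rw [← abs_of_nonneg (sub_nonneg.mpr ht), ← abs_mul]
  congr 1; ring

lemma quad_expand {K : ℕ} (a x y : Fin K → ℝ) (t : ℝ) :
    (1 / 2) * ∑ k, (x k + t * y k - a k) ^ 2 = (1 / 2) * ∑ k, (x k - a k) ^ 2
      - t * ∑ k, (a k - x k) * y k + t ^ 2 * ((1 / 2) * ∑ k, y k ^ 2) := by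
  simp only [Finset.mul_sum, ← Finset.sum_sub_distrib, ← Finset.sum_add_distrib]
  exact Finset.sum_congr rfl fun k _ => by ring

theorem stmt6 {K : ℕ} (hK : 1 ≤ K) (a : Fin K → ℝ)
    (α1 α2 : ℝ) (h1 : 0 < α1) (h2 : 0 ≤ α2)
    (θ0 : Fin K → ℝ) (h0 : ∀ θ : Fin K → ℝ, θ ≠ θ0 → flsa a α2 0 θ0 < flsa a α2 0 θ) :
    ∀ θ : Fin K → ℝ, θ ≠ (fun k => softTh α1 (θ0 k)) →
      flsa a α2 α1 (fun k => softTh α1 (θ0 k)) < flsa a α2 α1 θ := by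
  have hmin : ∀ θ : Fin K → ℝ, (1 / 2) * ∑ k, (θ0 k - a k) ^ 2 + fusP α2 θ0
      ≤ (1 / 2) * ∑ k, (θ k - a k) ^ 2 + fusP α2 θ := by
    intro θ
    by_cases h : θ = θ0
    · rw [h]
    · have := (h0 θ h).le
      rw [flsa_eq, flsa_eq] at this
      linarith
  have hq : ∀ y : Fin K → ℝ, 0 ≤ (1 / 2 : ℝ) * ∑ k, y k ^ 2 := fun y =>
    mul_nonneg (by norm_num) (Finset.sum_nonneg fun k _ => sq_nonneg _)
  have hge : ∀ y : Fin K → ℝ, ∑ k, (a k - θ0 k) * y k ≤ fusP α2 y := by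
    intro y
    have := lim_aux (fusP α2 y - ∑ k, (a k - θ0 k) * y k) _ (hq y) (by
      intro t ht _
      have e1 := hmin (fun k => θ0 k + t * y k)
      have e2 := fusP_add α2 t h2 ht.le θ0 y
      rw [quad_expand] at e1
      linarith)
    linarith
  have hle : fusP α2 θ0 ≤ ∑ k, (a k - θ0 k) * θ0 k := by
    have := lim_aux (∑ k, (a k - θ0 k) * θ0 k - fusP α2 θ0) _ (hq (fun k => - θ0 k)) (by
      intro t ht ht1
      have e1 := hmin (fun k => θ0 k + t * (- θ0 k))
      have e2 := fusP_shrink α2 t ht1 θ0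
      rw [quad_expand a θ0 (fun k => - θ0 k), e2] at e1
      have e3 : ∑ k, (a k - θ0 k) * (- θ0 k) = - ∑ k, (a k - θ0 k) * θ0 k := by
        rw [← Finset.sum_neg_distrib]
        exact Finset.sum_congr rfl fun k _ => by ring
      rw [e3] at e1
      linarith)
    linarith
  intro θ hθ
  set S : Fin K → ℝ := fun k => softTh α1 (θ0 k) with hS
  have hsplit : fusP α2 θ0 = fusP α2 S + fusP α2 (fun k => θ0 k - S k) := by
    unfold fusP
    rw [← mul_add]
    simp only [← Finset.sum_add_distrib]
    congr 1
    exact Finset.sum_congr rfl fun k _ => Finset.sum_congr rfl fun l _ =>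
      softTh_split α1 (θ0 k) (θ0 l) h1
  have hPS : fusP α2 S ≤ ∑ k, (a k - θ0 k) * S k := by
    have e1 := hge (fun k => θ0 k - S k)
    have e2 : ∑ k, (a k - θ0 k) * (θ0 k - S k)
        = ∑ k, (a k - θ0 k) * θ0 k - ∑ k, (a k - θ0 k) * S k := by
      rw [← Finset.sum_sub_distrib]
      exact Finset.sum_congr rfl fun k _ => by ring
    linarith
  have hPθ := hge θ
  have hmain : (1 / 2) * ∑ k, (S k - a k) ^ 2 + α1 * ∑ k, |S k| + ∑ k, (a k - θ0 k) * S k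
      < (1 / 2) * ∑ k, (θ k - a k) ^ 2 + α1 * ∑ k, |θ k| + ∑ k, (a k - θ0 k) * θ k := by
    simp only [Finset.mul_sum, ← Finset.sum_add_distrib]
    obtain ⟨j, hj⟩ := Function.ne_iff.mp hθ
    have hk : ∀ k, 1 / 2 * (S k - a k) ^ 2 + α1 * |S k| + (a k - θ0 k) * S k
        + 1 / 2 * (θ k - S k) ^ 2
        ≤ 1 / 2 * (θ k - a k) ^ 2 + α1 * |θ k| + (a k - θ0 k) * θ k := by
      intro k
      have : α1 * |S k| + (θ0 k - S k) * (θ k - S k) ≤ α1 * |θ k| :=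
        softTh_sub α1 (θ0 k) (θ k) h1
      linarith
    refine Finset.sum_lt_sum (fun k _ => ?_) ⟨j, Finset.mem_univ _, ?_⟩
    · have := hk k
      have := sq_nonneg (θ k - S k)
      linarith
    · have := hk j
      have : 0 < (θ j - S j) ^ 2 := by
        have := sub_ne_zero.mpr hj
        positivity
      linarith
  rw [flsa_eq, flsa_eq]
  linarith
end

section
/- Fix K ≥ 1, a ∈ ℝ^K, α₁ ≥ 0 and α₂ ≥ 0. The unique minimizer over θ ∈ ℝ^K of G(θ) = (1/2) Σ_{k=1}^K (θ_k − a_k)² + α₁ Σ_{k=1}^K |θ_k| + α₂ (Σ_{k=1}^K θ_k²)^{1/2} is given componentwise by θ_k = S_{α₁}(a_k) · max(1 − α₂ / ‖S_{α₁}(a)‖₂, 0), where S_{α₁}(a) ∈ ℝ^K is the vector with components S_{α₁}(a_k), ‖·‖₂ is the Euclidean norm, and θ = 0 when ‖S_{α₁}(a)‖₂ = 0. -/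
open Finset

/-- The group lasso subproblem objective with data `a`, ℓ1 parameter `α1`
and group parameter `α2`. -/
noncomputable def groupObj {K : ℕ} (a : Fin K → ℝ) (α1 α2 : ℝ) (θ : Fin K → ℝ) : ℝ :=
  (1 / 2) * ∑ k, (θ k - a k) ^ 2 + α1 * ∑ k, |θ k| + α2 * Real.sqrt (∑ k, (θ k) ^ 2)

theorem softTh_props (t z : ℝ) (ht : 0 ≤ t) :
    |z - softTh t z| ≤ t ∧ (z - softTh t z) * softTh t z = t * |softTh t z| := by
  unfold softTh
  rcases lt_trichotomy z 0 with h | h | h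
  · rw [Real.sign_of_neg h, abs_of_neg h]
    rcases le_total (-z - t) 0 with h' | h'
    · rw [max_eq_right h']; simp; rw [abs_of_neg h]; linarith
    · rw [max_eq_left h']
      have e : z - -1 * (-z - t) = -t := by ring
      rw [e, abs_neg, abs_of_nonneg ht, neg_one_mul, abs_neg, abs_of_nonneg h']
      exact ⟨le_rfl, by ring⟩
  · subst h; simp [ht]
  · rw [Real.sign_of_pos h, abs_of_pos h]
    rcases le_total (z - t) 0 with h' | h'
    · rw [max_eq_right h']; simp; rw [abs_of_pos h]; linarith
    · rw [max_eq_left h']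
      have e : z - 1 * (z - t) = t := by ring
      rw [e, one_mul, abs_of_nonneg ht, abs_of_nonneg h']
      exact ⟨le_rfl, rfl⟩

theorem shrink_props (N α : ℝ) (hN : 0 ≤ N) (hα : 0 ≤ α) :
    0 ≤ max (1 - α / N) 0 ∧ max (1 - α / N) 0 ≤ 1 ∧ (1 - max (1 - α / N) 0) * N ≤ α ∧
    max (1 - α / N) 0 * ((1 - max (1 - α / N) 0) * N ^ 2) = α * (max (1 - α / N) 0 * N) := by
  have hq : 0 ≤ α / N := div_nonneg hα hN
  refine ⟨le_max_right _ _, max_le (by linarith) zero_le_one, ?_⟩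
  rcases hN.eq_or_lt with h | h
  · subst h; simp [hα]
  · have e : α / N * N = α := div_mul_cancel₀ _ h.ne'
    rcases le_total (1 - α / N) 0 with h' | h'
    · rw [max_eq_right h']
      refine ⟨?_, by simp⟩
      nlinarith
    · rw [max_eq_left h']
      refine ⟨by linarith, ?_⟩
      linear_combination (1 - α / N) * N * e

/-- Closed-form solution of the group lasso subproblem: the unique minimizer is
componentwise soft-thresholding followed by group shrinkage. -/
theorem stmt7 {K : ℕ} (hK : 1 ≤ K) (a : Fin K → ℝ)
    (α1 α2 : ℝ) (h1 : 0 ≤ α1) (h2 : 0 ≤ α2)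
    (θh : Fin K → ℝ)
    (hθh : θh = fun k =>
      softTh α1 (a k) * max (1 - α2 / Real.sqrt (∑ k', (softTh α1 (a k')) ^ 2)) 0) :
    ∀ θ : Fin K → ℝ, θ ≠ θh → groupObj a α1 α2 θh < groupObj a α1 α2 θ := by
  intro θ hne
  set s : Fin K → ℝ := fun k => softTh α1 (a k) with hs
  set N := Real.sqrt (∑ k', (softTh α1 (a k')) ^ 2) with hN
  obtain ⟨c0, c1, c2, c3⟩ := shrink_props N α2 (Real.sqrt_nonneg _) h2
  set c := max (1 - α2 / N) 0 with hc
  have hN2 : N ^ 2 = ∑ k, s k ^ 2 := Real.sq_sqrt (Finset.sum_nonneg fun i _ => sq_nonneg _)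
  have hk : ∀ k, θh k = c * s k := fun k => by rw [hθh]; exact mul_comm _ _
  have hnorm : Real.sqrt (∑ k, θh k ^ 2) = c * N := by
    have : ∑ k, θh k ^ 2 = (c * N) ^ 2 := by
      rw [mul_pow, hN2, Finset.mul_sum]
      exact Finset.sum_congr rfl fun k _ => by rw [hk]; ring
    rw [this, Real.sqrt_sq (mul_nonneg c0 (Real.sqrt_nonneg _))]
  have hCS : ∑ k, θ k * s k ≤ Real.sqrt (∑ k, θ k ^ 2) * N :=
    Real.sum_mul_le_sqrt_mul_sqrt _ _ _
  have hpos : 0 < ∑ k, (θ k - θh k) ^ 2 := by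
    obtain ⟨k, hkne⟩ := Function.ne_iff.mp hne
    exact Finset.sum_pos' (fun i _ => sq_nonneg _)
      ⟨k, Finset.mem_univ _, by have := sub_ne_zero.mpr hkne; positivity⟩
  have hterm : ∀ k, (1 / 2) * (θh k - a k) ^ 2 + α1 * |θh k| + (1 / 2) * (θ k - θh k) ^ 2
      + (1 - c) * c * s k ^ 2 ≤
      (1 / 2) * (θ k - a k) ^ 2 + α1 * |θ k| + (1 - c) * (θ k * s k) := by
    intro k
    obtain ⟨p1, p2⟩ := softTh_props α1 (a k) h1
    change |a k - s k| ≤ α1 at p1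
    change (a k - s k) * s k = α1 * |s k| at p2
    have q : (a k - s k) * θ k ≤ α1 * |θ k| :=
      (le_abs_self _).trans (by rw [abs_mul]; gcongr)
    rw [hk, abs_mul, abs_of_nonneg c0]
    linear_combination q - c * p2
  have hsum := Finset.sum_le_sum fun k (_ : k ∈ Finset.univ) => hterm k
  simp only [Finset.sum_add_distrib, ← Finset.mul_sum] at hsum
  rw [← hN2] at hsum
  unfold groupObj
  rw [hnorm]
  have r0 := Real.sqrt_nonneg (∑ k, θ k ^ 2)
  have A := mul_le_mul_of_nonneg_left hCS (sub_nonneg.mpr c1)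
  have B := mul_le_mul_of_nonneg_left c2 r0
  linarith
end

section
/- Let Θ ∈ ℝ^{p×p} be symmetric positive definite and D ∈ ℝ^{p×p} be symmetric. If trace((Θ^{−1}D)²) < 1, then Θ + D is symmetric positive definite. -/
open Matrix

theorem aux_one_add {p : ℕ} (M : Matrix (Fin p) (Fin p) ℝ) (hM : M.IsSymm)
    (h : (M * M).trace < 1) : (1 + M).PosDef := by
  have hH : M.IsHermitian := by
    rw [Matrix.IsHermitian, conjTranspose_eq_transpose_of_trivial]; exact hM
  refine .of_dotProduct_mulVec_pos (isHermitian_one.add hH) fun x hx => ?_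
  have hs : 0 < x ⬝ᵥ x := by simpa using dotProduct_star_self_pos_iff.mpr hx
  have hF : (M * M).trace = ∑ q : Fin p × Fin p, M q.1 q.2 ^ 2 := by
    rw [Fintype.sum_prod_type]
    simp only [trace, diag_apply, mul_apply]
    refine Finset.sum_congr rfl fun i _ => Finset.sum_congr rfl fun j _ => ?_
    rw [hM.apply i j, sq]
  have hq : x ⬝ᵥ M *ᵥ x = ∑ q : Fin p × Fin p, M q.1 q.2 * (x q.1 * x q.2) := by
    rw [Fintype.sum_prod_type]
    simp only [dotProduct, mulVec, Finset.mul_sum]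
    refine Finset.sum_congr rfl fun i _ => Finset.sum_congr rfl fun j _ => ?_
    ring
  have hn : (x ⬝ᵥ x) ^ 2 = ∑ q : Fin p × Fin p, (x q.1 * x q.2) ^ 2 := by
    rw [Fintype.sum_prod_type, sq]
    simp only [dotProduct, Finset.sum_mul_sum]
    refine Finset.sum_congr rfl fun i _ => Finset.sum_congr rfl fun j _ => ?_
    ring
  have hcs := Finset.sum_mul_sq_le_sq_mul_sq Finset.univ
    (fun q : Fin p × Fin p => M q.1 q.2) (fun q => x q.1 * x q.2)
  rw [← hF, ← hq, ← hn] at hcs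
  have hlt : (x ⬝ᵥ M *ᵥ x) ^ 2 < (x ⬝ᵥ x) ^ 2 := by
    have : 0 < (x ⬝ᵥ x) ^ 2 := by positivity
    nlinarith
  have := (abs_lt_of_sq_lt_sq' hlt hs.le).1
  simp only [star_trivial, add_mulVec, one_mulVec, dotProduct_add]
  linarith

open scoped MatrixOrder Matrix.Norms.L2Operator in
theorem aux_factor {p : ℕ} (Θ : Matrix (Fin p) (Fin p) ℝ) (hΘ : Θ.PosDef) :
    ∃ B : Matrix (Fin p) (Fin p) ℝ, IsUnit B ∧ Θ = Bᵀ * B := by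
  obtain ⟨y, hy, h⟩ := CStarAlgebra.isStrictlyPositive_iff_eq_star_mul_self.mp
        hΘ.isStrictlyPositive
  refine ⟨y, hy, ?_⟩
  rw [h, star_eq_conjTranspose, conjTranspose_eq_transpose_of_trivial]

/-- If `Θ` is symmetric positive definite, `D` is symmetric and
`trace((Θ⁻¹ D)²) < 1`, then `Θ + D` is symmetric positive definite. -/
theorem stmt9 {p : ℕ} (Θ D : Matrix (Fin p) (Fin p) ℝ)
    (hΘ : Θ.PosDef) (hD : D.IsSymm)
    (h : ((Θ⁻¹ * D) ^ 2).trace < 1) :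
    (Θ + D).PosDef := by
  obtain ⟨B, hB, rfl⟩ := aux_factor Θ hΘ
  have hdet := (Matrix.isUnit_iff_isUnit_det B).mp hB
  have h1 : B⁻¹ * B = 1 := nonsing_inv_mul B hdet
  have h2 : Bᵀ * B⁻¹ᵀ = 1 := by rw [← transpose_mul, h1, transpose_one]
  have hM : (B⁻¹ᵀ * D * B⁻¹).IsSymm := by
    simp [Matrix.IsSymm, transpose_mul, hD.eq, Matrix.mul_assoc]
  have ht : ((B⁻¹ᵀ * D * B⁻¹) * (B⁻¹ᵀ * D * B⁻¹)).trace < 1 := by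
    rw [Matrix.mul_inv_rev, ← transpose_nonsing_inv, sq] at h
    convert h using 1
    rw [← Matrix.mul_assoc, Matrix.trace_mul_comm]
    simp only [Matrix.mul_assoc]
  have key := (aux_one_add _ hM ht).conjTranspose_mul_mul_same
    (Matrix.mulVec_injective_iff_isUnit.mpr hB)
  convert key using 1
  rw [conjTranspose_eq_transpose_of_trivial, Matrix.mul_add, Matrix.add_mul, Matrix.mul_one]
  congr 1
  calc D = (Bᵀ * B⁻¹ᵀ) * D * (B⁻¹ * B) := by rw [h1, h2, Matrix.one_mul, Matrix.mul_one]
    _ = _ := by simp only [Matrix.mul_assoc]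
end

section
/- Let S ∈ ℝ^{p×p} be symmetric, λ > 0, and let Θ* be a symmetric positive definite p×p matrix. Then Θ* minimizes the graphical lasso objective F(Θ) = −log det Θ + trace(SΘ) + λ Σ_{i≠j} |θ_{ij}| over symmetric positive definite matrices if and only if there exists a symmetric matrix Φ ∈ ℝ^{p×p} with Φ_{ii} = 0 for all i, |Φ_{ij}| ≤ 1 for all i ≠ j, Φ_{ij} = sign(θ*_{ij}) whenever i ≠ j and θ*_{ij} ≠ 0, such that (Θ*)^{−1} − S − λΦ = 0. -/
open Matrix Finset

open scoped MatrixOrder in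
lemma gl_exists_factor {p : ℕ} {A : Matrix (Fin p) (Fin p) ℝ} (hA : A.PosDef) :
    ∃ C : Matrix (Fin p) (Fin p) ℝ, IsUnit C ∧ A = Cᴴ * C := by
  obtain ⟨C, hC⟩ := CStarAlgebra.nonneg_iff_eq_star_mul_self.mp hA.posSemidef.nonneg
  refine ⟨C, ?_, hC⟩
  have h := hA.det_pos
  rw [hC, det_mul] at h
  rw [isUnit_iff_isUnit_det, isUnit_iff_ne_zero]
  intro h0
  rw [h0] at h
  simp at h

lemma gl_logdet_le {p : ℕ} {M : Matrix (Fin p) (Fin p) ℝ} (hM : M.PosDef) :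
    Real.log M.det ≤ M.trace - p := by
  rw [hM.1.det_eq_prod_eigenvalues, hM.1.trace_eq_sum_eigenvalues]
  simp only [RCLike.ofReal_real_eq_id, id]
  rw [Real.log_prod (fun i _ => (hM.eigenvalues_pos i).ne')]
  calc _ ≤ ∑ i, (hM.1.eigenvalues i - 1) :=
        Finset.sum_le_sum fun i _ => Real.log_le_sub_one_of_pos (hM.eigenvalues_pos i)
    _ = _ := by simp

lemma gl_concave {p : ℕ} {A B : Matrix (Fin p) (Fin p) ℝ} (hA : A.PosDef) (hB : B.PosDef) :
    Real.log B.det - Real.log A.det ≤ (A⁻¹ * (B - A)).trace := by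
  obtain ⟨C, hC, h⟩ := gl_exists_factor hA.inv
  have hM : (C * B * Cᴴ).PosDef :=
    hB.mul_mul_conjTranspose_same (Matrix.vecMul_injective_of_isUnit hC)
  have h1 := gl_logdet_le hM
  have hdet : (C * B * Cᴴ).det = A.det⁻¹ * B.det := by
    have : A⁻¹.det = A.det⁻¹ := by rw [det_nonsing_inv, Ring.inverse_eq_inv']
    rw [← this, h]; simp only [det_mul]; ring
  have htr : (C * B * Cᴴ).trace = (A⁻¹ * B).trace := by
    rw [trace_mul_cycle, h]
  rw [hdet, htr, Real.log_mul (inv_ne_zero hA.det_pos.ne') hB.det_pos.ne', Real.log_inv] at h1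
  have hu : IsUnit A.det := hA.det_pos.ne'.isUnit
  rw [Matrix.mul_sub, trace_sub, nonsing_inv_mul _ hu, trace_one, Fintype.card_fin]
  linarith

lemma gl_posDef_open {p : ℕ} {A E : Matrix (Fin p) (Fin p) ℝ} (hA : A.PosDef) (hE : E.IsSymm) :
    ∀ᶠ t : ℝ in nhds 0, (A + t • E).PosDef := by
  have hc : Continuous fun q : (Fin p → ℝ) × ℝ => q.1 ⬝ᵥ ((A + q.2 • E) *ᵥ q.1) := by fun_prop
  have hK : IsCompact (Metric.sphere (0 : Fin p → ℝ) 1) := isCompact_sphere _ _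
  have h := hK.eventually_forall_of_forall_eventually (x₀ := (0:ℝ))
    (P := fun t x => 0 < x ⬝ᵥ ((A + t • E) *ᵥ x)) (by
      intro x hx
      have hx0 : x ≠ 0 := by
        rintro rfl
        simp at hx
      have hpos : 0 < x ⬝ᵥ ((A + (0:ℝ) • E) *ᵥ x) := by
        simpa using hA.dotProduct_mulVec_pos hx0
      have hc' : Continuous fun q : ℝ × (Fin p → ℝ) => q.2 ⬝ᵥ ((A + q.1 • E) *ᵥ q.2) :=
        hc.comp continuous_swap
      exact (hc'.tendsto (0, x)).eventually (lt_mem_nhds hpos))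
  filter_upwards [h] with t ht
  refine PosDef.of_dotProduct_mulVec_pos ?_ ?_
  · have : (t • E).IsHermitian := by
      simp only [IsHermitian, conjTranspose_eq_transpose_of_trivial, transpose_smul, hE.eq]
    exact hA.1.add this
  · intro x hx
    have hn : ‖x‖ ≠ 0 := norm_ne_zero_iff.mpr hx
    have := ht (‖x‖⁻¹ • x) (by simp [norm_smul, hn])
    rw [mulVec_smul, smul_dotProduct, dotProduct_smul, smul_smul, smul_eq_mul] at this
    simp only [star_trivial]
    exact (mul_pos_iff_of_pos_left (by positivity)).mp this

lemma gl_hasDerivAt {p : ℕ} {A E S : Matrix (Fin p) (Fin p) ℝ} (hA : A.PosDef) :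
    HasDerivAt (fun t : ℝ => -Real.log (A + t • E).det + (S * (A + t • E)).trace)
      (-((A⁻¹ - S) * E).trace) 0 := by
  have hu : IsUnit A.det := hA.det_pos.ne'.isUnit
  have h1 : HasDerivAt (fun t : ℝ => (A + t • E).det) (A.det * (A⁻¹ * E).trace) 0 := by
    have he : (fun t : ℝ => (A + t • E).det) = fun t => A.det * (1 + (A⁻¹ * E).trace * t +
        (det (1 + (Polynomial.X : Polynomial ℝ) • (A⁻¹ * E).map Polynomial.C)).divX.divX.eval t
          * t ^ 2) := by
      funext t
      rw [← det_one_add_smul, ← det_mul, Matrix.mul_add, Matrix.mul_smul, ← Matrix.mul_assoc,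
        mul_nonsing_inv _ hu, Matrix.mul_one, Matrix.one_mul]
    rw [he]
    generalize (det (1 + (Polynomial.X : Polynomial ℝ) •
      (A⁻¹ * E).map Polynomial.C)).divX.divX = q
    have := ((((hasDerivAt_id (0:ℝ)).const_mul (A⁻¹ * E).trace).const_add 1).add
      ((q.hasDerivAt 0).mul ((hasDerivAt_id (0:ℝ)).pow 2))).const_mul A.det
    exact this.congr_deriv (by simp)
  have h2 := (h1.log (by simpa using hA.det_pos.ne')).neg
  have h3 : HasDerivAt (fun t : ℝ => (S * (A + t • E)).trace) ((S * E).trace) 0 := by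
    have he : (fun t : ℝ => (S * (A + t • E)).trace) =
        fun t => (S * A).trace + t * (S * E).trace := by
      funext t
      simp [Matrix.mul_add]
    rw [he]
    simpa using ((hasDerivAt_id (0:ℝ)).mul_const (S * E).trace).const_add (S * A).trace
  refine (h2.add h3).congr_deriv ?_
  have := hA.det_pos.ne'
  rw [zero_smul, add_zero, Matrix.sub_mul, trace_sub, mul_div_cancel_left₀ _ this]
  ring

lemma gl_trace_single {p : ℕ} (G : Matrix (Fin p) (Fin p) ℝ) (i j : Fin p) :
    (G * Matrix.single i j (1:ℝ)).trace = G j i := by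
  simp [Matrix.trace_mul_single]

lemma gl_deriv_nonneg {k : ℝ → ℝ} {d : ℝ} (h : HasDerivAt k d 0)
    (hk : ∀ᶠ t : ℝ in nhds 0, 0 < t → k 0 ≤ k t) : 0 ≤ d := by
  have h1 := (hasDerivAt_iff_tendsto_slope.mp h).mono_left
    (nhdsWithin_mono (0:ℝ) (fun x (hx : 0 < x) => hx.ne') : nhdsWithin (0:ℝ) (Set.Ioi 0) ≤ _)
  refine ge_of_tendsto h1 ?_
  filter_upwards [nhdsWithin_le_nhds hk, self_mem_nhdsWithin] with t ht ht0
  have ht0 : 0 < t := ht0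
  rw [slope_def_field]
  exact div_nonneg (by linarith [ht ht0]) (by linarith)

lemma gl_deriv_nonpos {k : ℝ → ℝ} {d : ℝ} (h : HasDerivAt k d 0)
    (hk : ∀ᶠ t : ℝ in nhds 0, t < 0 → k 0 ≤ k t) : d ≤ 0 := by
  have h1 : HasDerivAt (fun t => k (-t)) (-d) 0 := by
    have h' : HasDerivAt k d (-(0:ℝ)) := by simpa using h
    have h2 := h'.comp (0:ℝ) (hasDerivAt_neg (0:ℝ))
    rw [mul_neg_one] at h2
    exact h2
  have h2 : Filter.Tendsto (fun t : ℝ => -t) (nhds 0) (nhds 0) := by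
    simpa using (continuous_neg (G := ℝ)).tendsto 0
  have := gl_deriv_nonneg h1 (by
    filter_upwards [h2.eventually hk] with t ht h0
    simpa using ht (by linarith))
  linarith

/-- penalty -/
noncomputable def glPen {p : ℕ} (Θ : Matrix (Fin p) (Fin p) ℝ) : ℝ :=
  ∑ i, ∑ j, (if i ≠ j then |Θ i j| else 0)

lemma glPen_diag {p : ℕ} (A : Matrix (Fin p) (Fin p) ℝ) (i : Fin p) (t : ℝ) :
    glPen (A + t • Matrix.single i i (1:ℝ)) = glPen A := by
  unfold glPen
  refine Finset.sum_congr rfl fun a _ => Finset.sum_congr rfl fun b _ => ?_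
  split_ifs with h
  · have : ¬ (i = a ∧ i = b) := by rintro ⟨rfl, rfl⟩; exact h rfl
    simp [this]
  · rfl

lemma glPen_off {p : ℕ} (A : Matrix (Fin p) (Fin p) ℝ) (hA : A.IsSymm) (i j : Fin p) (hij : i ≠ j)
    (t : ℝ) :
    glPen (A + t • (Matrix.single i j (1:ℝ) + Matrix.single j i 1)) =
      glPen A + 2 * (|A i j + t| - |A i j|) := by
  have hs : A j i = A i j := hA.apply i j
  have : ∀ a b : Fin p, (if a ≠ b then
      |(A + t • (Matrix.single i j (1:ℝ) + Matrix.single j i 1) : Matrix (Fin p) (Fin p) ℝ) a b| else 0)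
      = (if a ≠ b then |A a b| else 0) + (if i = a then if j = b then (|A i j + t| - |A i j|) else 0 else 0)
        + (if j = a then if i = b then (|A i j + t| - |A i j|) else 0 else 0) := by
    intro a b
    simp only [Matrix.add_apply, Matrix.smul_apply, Matrix.single_apply, smul_eq_mul]
    by_cases h1 : i = a <;> by_cases h2 : j = b <;> by_cases h3 : j = a <;> by_cases h4 : i = b <;>
      simp_all
  unfold glPen
  simp only [this, Finset.sum_add_distrib]
  simp
  ring

/-- Optimality condition for the graphical lasso: `Θ*` minimizes the objective over
symmetric positive definite matrices iff `(Θ*)⁻¹ - S - λΦ = 0` for some symmetric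
subgradient matrix `Φ`. -/
theorem stmt12 {p : ℕ} (S : Matrix (Fin p) (Fin p) ℝ) (hS : S.IsSymm)
    (l : ℝ) (hl : 0 < l)
    (Θs : Matrix (Fin p) (Fin p) ℝ) (hΘs : Θs.PosDef) :
    (∀ Θ : Matrix (Fin p) (Fin p) ℝ, Θ.PosDef → glObj S l Θs ≤ glObj S l Θ) ↔
      ∃ Φ : Matrix (Fin p) (Fin p) ℝ, Φ.IsSymm ∧ (∀ i, Φ i i = 0) ∧
        (∀ i j, i ≠ j → |Φ i j| ≤ 1) ∧
        (∀ i j, i ≠ j → Θs i j ≠ 0 → Φ i j = Real.sign (Θs i j)) ∧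
        Θs⁻¹ - S - l • Φ = 0 := by
  have hsym : Θs.IsSymm := by
    have := hΘs.1.eq
    rwa [conjTranspose_eq_transpose_of_trivial] at this
  constructor
  · intro hmin
    have hG : (Θs⁻¹ - S).IsSymm := by
      have := hΘs.inv.1.eq
      rw [conjTranspose_eq_transpose_of_trivial] at this
      rw [Matrix.IsSymm, transpose_sub, this, hS.eq]
    set G := Θs⁻¹ - S with hGdef
    have hdiag : ∀ i, G i i = 0 := by
      intro i
      have hE : (Matrix.single i i (1:ℝ)).IsSymm := by simp [Matrix.IsSymm]
      have hd := gl_hasDerivAt (E := Matrix.single i i (1:ℝ)) (S := S) hΘs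
      have hm : ∀ᶠ t : ℝ in nhds 0, -Real.log (Θs + (0:ℝ) • Matrix.single i i (1:ℝ)).det
          + (S * (Θs + (0:ℝ) • Matrix.single i i (1:ℝ))).trace ≤
          -Real.log (Θs + t • Matrix.single i i (1:ℝ)).det
          + (S * (Θs + t • Matrix.single i i (1:ℝ))).trace := by
        filter_upwards [gl_posDef_open hΘs hE] with t ht
        have h1 := hmin _ ht
        have h2 := glPen_diag Θs i t
        unfold glPen at h2
        unfold glObj at h1
        rw [h2] at h1
        rw [zero_smul, add_zero]
        linarith
      have h1 := gl_deriv_nonneg hd (hm.mono fun t h _ => h)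
      have h2 := gl_deriv_nonpos hd (hm.mono fun t h _ => h)
      have h3 : ((Θs⁻¹ - S) * Matrix.single i i (1:ℝ)).trace = G i i := by
        rw [← hGdef, gl_trace_single]
      rw [h3] at h1 h2
      linarith
    have hoff : ∀ i j, i ≠ j → |G i j| ≤ l ∧ (Θs i j ≠ 0 → G i j = l * Real.sign (Θs i j)) := by
      intro i j hij
      set E : Matrix (Fin p) (Fin p) ℝ := Matrix.single i j (1:ℝ) + Matrix.single j i 1 with hEd
      have hE : E.IsSymm := by simp [hEd, Matrix.IsSymm, add_comm]
      have hd := gl_hasDerivAt (E := E) (S := S) hΘs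
      have h3 : ((Θs⁻¹ - S) * E).trace = 2 * G i j := by
        rw [← hGdef, hEd, Matrix.mul_add, trace_add, gl_trace_single, gl_trace_single]
        have := hG.apply i j
        linarith
      rw [h3] at hd
      set f : ℝ → ℝ := fun t : ℝ => -Real.log (Θs + t • E).det + (S * (Θs + t • E)).trace with hf
      have hm : ∀ᶠ t : ℝ in nhds 0, f 0 ≤ f t + 2 * l * (|Θs i j + t| - |Θs i j|) := by
        filter_upwards [gl_posDef_open hΘs hE] with t ht
        have h1 := hmin _ ht
        have h2 := glPen_off Θs hsym i j hij t
        rw [← hEd] at h2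
        unfold glPen at h2
        unfold glObj at h1
        rw [h2] at h1
        simp only [hf]
        rw [zero_smul, add_zero]
        linarith
      have key : ∀ c : ℝ, HasDerivAt (fun t => f t + c * t) (-(2 * G i j) + c) 0 := fun c => by
        have h2 := hd.add ((hasDerivAt_id (0:ℝ)).const_mul c)
        rw [mul_one] at h2
        exact h2
      have hA : G i j ≤ l := by
        have := gl_deriv_nonneg (key (2 * l)) (by
          filter_upwards [hm] with t ht h0
          have := abs_add_le (Θs i j) t
          rw [abs_of_pos h0] at this
          nlinarith)
        linarith
      have hB : -l ≤ G i j := by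
        have := gl_deriv_nonpos (key (-(2 * l))) (by
          filter_upwards [hm] with t ht h0
          have := abs_add_le (Θs i j) t
          rw [abs_of_neg h0] at this
          nlinarith)
        linarith
      refine ⟨abs_le.mpr ⟨hB, hA⟩, fun hne => ?_⟩
      rcases lt_or_gt_of_ne hne with hn | hp
      · rw [Real.sign_of_neg hn]
        have := gl_deriv_nonneg (key (-(2 * l))) (by
          filter_upwards [hm, gt_mem_nhds (show (0:ℝ) < -Θs i j by linarith)] with t ht h1 h0
          rw [abs_of_neg hn, abs_of_neg (by linarith)] at ht
          linarith)
        linarith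
      · rw [Real.sign_of_pos hp]
        have := gl_deriv_nonpos (key (2 * l)) (by
          filter_upwards [hm, lt_mem_nhds (show -Θs i j < (0:ℝ) by linarith)] with t ht h1 h0
          rw [abs_of_pos hp, abs_of_pos (by linarith)] at ht
          linarith)
        linarith
    refine ⟨l⁻¹ • G, ?_, ?_, ?_, ?_, ?_⟩
    · rw [Matrix.IsSymm, transpose_smul, hG.eq]
    · intro i; simp [hdiag i]
    · intro i j hij
      rw [Matrix.smul_apply, smul_eq_mul, abs_mul, abs_of_pos (inv_pos.mpr hl),
        inv_mul_le_iff₀ hl, mul_one]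
      exact (hoff i j hij).1
    · intro i j hij hne
      rw [Matrix.smul_apply, smul_eq_mul, (hoff i j hij).2 hne, inv_mul_cancel_left₀ hl.ne']
    · rw [smul_smul, mul_inv_cancel₀ hl.ne', one_smul, sub_self]
  · rintro ⟨Φ, -, hΦd, hΦ1, hΦs, hΦ⟩ Θ hΘ
    have hc := gl_concave hΘs hΘ
    have hinv : Θs⁻¹ = S + l • Φ := by
      rw [sub_sub] at hΦ
      exact sub_eq_zero.mp hΦ
    have hs2 : Θ.IsSymm := by
      have := hΘ.1.eq
      rwa [conjTranspose_eq_transpose_of_trivial] at this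
    have ht : (Φ * (Θ - Θs)).trace ≤ glPen Θ - glPen Θs := by
      unfold glPen
      simp only [Matrix.trace, Matrix.diag_apply, Matrix.mul_apply]
      rw [← Finset.sum_sub_distrib]
      refine Finset.sum_le_sum fun i _ => ?_
      rw [← Finset.sum_sub_distrib]
      refine Finset.sum_le_sum fun j _ => ?_
      rw [Matrix.sub_apply, hs2.apply i j, hsym.apply i j]
      by_cases hij : i = j
      · subst hij; simp [hΦd]
      · rw [if_pos hij, if_pos hij]
        have h1 : Φ i j * Θ i j ≤ |Θ i j| := by
          refine (le_abs_self _).trans ?_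
          rw [abs_mul]
          exact mul_le_of_le_one_left (abs_nonneg _) (hΦ1 i j hij)
        have h2 : Φ i j * Θs i j = |Θs i j| := by
          by_cases h0 : Θs i j = 0
          · simp [h0]
          · rw [hΦs i j hij h0]
            rcases lt_or_gt_of_ne h0 with hn | hp
            · rw [Real.sign_of_neg hn, abs_of_neg hn]; ring
            · rw [Real.sign_of_pos hp, abs_of_pos hp]; ring
        linarith
    rw [hinv, Matrix.add_mul, trace_add, Matrix.smul_mul, trace_smul, smul_eq_mul,
      Matrix.mul_sub S, trace_sub] at hc
    have := mul_le_mul_of_nonneg_left ht hl.le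
    unfold glPen at this
    unfold glObj
    linarith
end

section
/- Let S ∈ ℝ^{p×p} be symmetric and λ > 0. For every symmetric positive definite Θ ∈ ℝ^{p×p} and every symmetric U ∈ ℝ^{p×p} with max_{i,j} |U_{ij}| ≤ λ and S + U symmetric positive definite, log det(S + U) + p ≤ −log det Θ + trace(SΘ) + λ Σ_{i,j} |θ_{ij}| (weak duality between the graphical lasso problem with full ℓ1 penalty and its dual). -/
open Matrix Finset

theorem aux_logdet {p : ℕ} (M : Matrix (Fin p) (Fin p) ℝ) (hM : M.PosDef) :
    Real.log M.det + p ≤ M.trace := by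
  have h1 := hM.isHermitian.det_eq_prod_eigenvalues
  have h2 := hM.isHermitian.trace_eq_sum_eigenvalues
  simp only [RCLike.ofReal_real_eq_id, id] at h1 h2
  rw [h1, h2, Real.log_prod (fun i _ => (hM.eigenvalues_pos i).ne')]
  have : (p : ℝ) = ∑ _i : Fin p, (1 : ℝ) := by simp
  rw [this, ← Finset.sum_add_distrib]
  refine Finset.sum_le_sum fun i _ => ?_
  linarith [Real.log_le_sub_one_of_pos (hM.eigenvalues_pos i)]

theorem aux_pair {p : ℕ} (W Θ : Matrix (Fin p) (Fin p) ℝ) (hW : W.PosDef) (hΘ : Θ.PosDef) :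
    Real.log W.det + Real.log Θ.det + p ≤ (W * Θ).trace := by
  obtain ⟨B, hB⟩ : ∃ B : Matrix (Fin p) (Fin p) ℝ, Θ = Bᴴ * B := by
    open scoped MatrixOrder in
    exact CStarAlgebra.nonneg_iff_eq_star_mul_self.mp hΘ.posSemidef.nonneg
  have hd : Θ.det = B.det * B.det := by rw [hB]; simp
  have hdet : B.det ≠ 0 := by
    intro h
    have := hΘ.det_pos
    rw [hd, h] at this
    simp at this
  have hu : IsUnit B := (Matrix.isUnit_iff_isUnit_det B).2 hdet.isUnit
  have hM : (B * W * Bᴴ).PosDef := by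
    have := hW.conjTranspose_mul_mul_same (B := Bᴴ) (mulVec_injective_of_isUnit (by
      exact hu.star))
    simpa using this
  have h := aux_logdet _ hM
  have e1 : (B * W * Bᴴ).det = W.det * Θ.det := by
    rw [hd]; simp; ring
  have e2 : (B * W * Bᴴ).trace = (W * Θ).trace := by
    rw [hB, Matrix.mul_assoc, Matrix.trace_mul_comm, Matrix.mul_assoc]
  rw [e1, e2, Real.log_mul hW.det_pos.ne' hΘ.det_pos.ne'] at h
  exact h


/-- Weak duality for the graphical lasso with full ℓ1 penalty: every dual feasible `U`
gives a lower bound `log det(S + U) + p` on the primal objective. -/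
theorem stmt13 {p : ℕ} (S : Matrix (Fin p) (Fin p) ℝ) (hS : S.IsSymm)
    (l : ℝ) (hl : 0 < l)
    (Θ : Matrix (Fin p) (Fin p) ℝ) (hΘ : Θ.PosDef)
    (U : Matrix (Fin p) (Fin p) ℝ) (hU : U.IsSymm)
    (hUb : ∀ i j, |U i j| ≤ l) (hSU : (S + U).PosDef) :
    Real.log (S + U).det + p ≤
      -Real.log Θ.det + (S * Θ).trace + l * ∑ i, ∑ j, |Θ i j| := by

  have h := aux_pair _ _ hSU hΘ
  rw [Matrix.add_mul, Matrix.trace_add] at h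
  have hb : (U * Θ).trace ≤ l * ∑ i, ∑ j, |Θ i j| := by
    simp only [Matrix.trace, Matrix.diag, Matrix.mul_apply]
    rw [Finset.sum_comm, Finset.mul_sum]
    refine Finset.sum_le_sum fun i _ => ?_
    rw [Finset.mul_sum]
    refine Finset.sum_le_sum fun j _ => ?_
    calc U j i * Θ i j ≤ |U j i * Θ i j| := le_abs_self _
      _ = |U j i| * |Θ i j| := abs_mul _ _
      _ ≤ l * |Θ i j| := mul_le_mul_of_nonneg_right (hUb j i) (abs_nonneg _)
  linarith
end
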